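/- Fix n ≥ 1, a partition λ, an n-core δ, and N ≥ 1. Let s_λ(A_q(x)) be the Schur polynomial s_λ evaluated at the nN variables {q^{2j}x_i : 1 ≤ i ≤ N, 0 ≤ j ≤ n−1}. Then in ℤ[q][x_1,…,x_N] one has s_λ(A_q(x)) = Σ_μ c^λ_μ(q) · 𝒢_μ(x_1,…,x_N;q), where the sum is over all partitions μ whose n-core is δ and with |μ/δ| = n|λ|. -/

import Mathlib

/-!
Both sides come from one Cauchy identity. For an `n`-core `δ`,
`∑_μ 𝒢_{μ/δ}(x; q) 𝒢_{μ/δ}(y; q) = ∏_{i,k} ∏_{j<n} 1 / (1 - x_i y_k q^{2j})`,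
and the right-hand side is also the Cauchy kernel `∑_ν s_ν(A_q(x)) s_ν(y)`, the case `n = 1`, `δ = ∅`
of the same identity for the alphabet `A_q(x)`. Expanding `𝒢_{μ/δ}(y; q) = ∑_ν c^ν_μ(q) s_ν(y)` and
comparing coefficients of `s_λ(y)`, for `y` in at least `|λ|` variables, gives the theorem
(`main_expansion`). The comparison uses the linear independence of Schur polynomials (`schur_indep`),
which follows from triangularity for the dominance order.

The Cauchy identity is proved on bead configurations. A partition `μ` is encoded by the set of
positions `μ_r - r`; adding an `n`-ribbon moves a bead from `i` to `i + n`, and its spin is the number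
of beads jumped over (`BeadStep.spin`). Let `u_i` be the operator making this move with weight
`q^spin`, and `d_i` its transpose. A horizontal ribbon strip is built by adding its ribbons from left
to right (`strip_remove`, `strip_add`), so `U(x) = ⋯ (1 + x u_1) (1 + x u_0) (1 + x u_{-1}) ⋯` adds
horizontal strips (`uWin_beads`) and iterating it enumerates ribbon tableaux (`uAll_beads`).

For `i ≠ j` the operators `d_i` and `u_j` commute (`d_comm_u`). For `i = j` there is the relation
`(1 + y d_i) C_{i+1} (1 + x u_i) = (1 + x u_i) C_i (1 + y d_i)` (`local_exchange`), in which `C_i` is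
diagonal with eigenvalue `∏_{k ≤ j < n} (1 - x y q^{2j})` on configurations with `k` beads in
`[i, i + n)`. Sliding `C` through all positions (`window_exchange`) turns it from the full product, far
to the right where there are no beads, into the identity, far to the left where every position is
occupied. Hence `∏_j (1 - x y q^{2j}) D(y) U(x) = U(x) D(y)` (`dWin_uWin`), and applying this to the
vector of a core, which `D(y)` fixes, gives the Cauchy identity (`bead_cauchy`, `cauchy_trunc`).
Infinite products are avoided by truncating in a degree variable `t` and using finite windows of
positions.
-/

open scoped Classical

noncomputable section

/-- A cell of a Young/skew diagram: (row, column). -/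
abbrev Cell : Type := ℕ × ℕ

/-- Two cells are adjacent if they share an edge. -/
def Adj (a b : Cell) : Prop :=
  (a.1 = b.1 ∧ (a.2 + 1 = b.2 ∨ b.2 + 1 = a.2)) ∨
  (a.2 = b.2 ∧ (a.1 + 1 = b.1 ∨ b.1 + 1 = a.1))

/-- Reachability inside a finite set of cells via edge-adjacency. -/
def Reach (S : Finset Cell) (a b : Cell) : Prop :=
  Relation.ReflTransGen (fun x y => y ∈ S ∧ Adj x y) a b

/-- A set of cells is connected if any two of its cells are joined by a path inside it. -/
def CellsConnected (S : Finset Cell) : Prop :=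
  ∀ a ∈ S, ∀ b ∈ S, Reach S a b

/-- The connected component of the cell `c` inside `S`. -/
def component (S : Finset Cell) (c : Cell) : Finset Cell :=
  S.filter (fun d => Reach S c d)

/-- The number of connected components of a set of cells. -/
def numComponents (S : Finset Cell) : ℕ :=
  (S.image (fun c => component S c)).card

/-- `S` contains no 2 × 2 square of cells. -/
def NoSquare (S : Finset Cell) : Prop :=
  ¬ ∃ i j : ℕ, (i, j) ∈ S ∧ (i + 1, j) ∈ S ∧ (i, j + 1) ∈ S ∧ (i + 1, j + 1) ∈ S

/-- `S` is (the set of cells of) a skew shape `λ/μ`. -/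
def IsSkewCells (S : Finset Cell) : Prop :=
  ∃ lam mu : YoungDiagram, mu ≤ lam ∧ S = lam.cells \ mu.cells

/-- An `n`-ribbon: a connected skew shape with `n` cells and no 2 × 2 square. -/
def IsRibbon (n : ℕ) (S : Finset Cell) : Prop :=
  S.card = n ∧ CellsConnected S ∧ NoSquare S ∧ IsSkewCells S

/-- The spin of a ribbon: the number of rows it occupies, minus 1. -/
def ribbonSpin (S : Finset Cell) : ℕ := (S.image Prod.fst).card - 1

/-- `T` is a tiling of the cell set `S` by `n`-ribbons. -/
def IsTilingOf (n : ℕ) (S : Finset Cell) (T : Finset (Finset Cell)) : Prop :=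
  (∀ R ∈ T, IsRibbon n R) ∧
  ((T : Set (Finset Cell)).Pairwise fun A B => Disjoint A B) ∧
  T.biUnion id = S

/-- `S` can be tiled by `n`-ribbons. -/
def Tileable (n : ℕ) (S : Finset Cell) : Prop := ∃ T, IsTilingOf n S T

/-- Total spin of a tiling. -/
def tilingSpin (T : Finset (Finset Cell)) : ℕ := ∑ R ∈ T, ribbonSpin R

/-- The maximum spin of an `n`-ribbon tiling of `S`. -/
def maxSpin (n : ℕ) (S : Finset Cell) : ℕ :=
  sSup {m : ℕ | ∃ T, IsTilingOf n S T ∧ tilingSpin T = m}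

/-- `c` is the topright-most cell of `R`: maximal column and, among those, minimal row. -/
def TopRightCell (R : Finset Cell) (c : Cell) : Prop :=
  c ∈ R ∧ ∀ d ∈ R, d.2 ≤ c.2 ∧ (d.2 = c.2 → c.1 ≤ d.1)

/-- Every ribbon of the tiling `T` has its topright-most cell touching the northern
edge of the shape `S`: the cell directly above it is not in `S`. -/
def NorthernCond (S : Finset Cell) (T : Finset (Finset Cell)) : Prop :=
  ∀ R ∈ T, ∀ c : Cell, TopRightCell R c → (c.1 = 0 ∨ (c.1 - 1, c.2) ∉ S)

/-- `T` is a tiling of `S` witnessing that `S` is a horizontal `n`-ribbon strip. -/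
def IsHStripTiling (n : ℕ) (S : Finset Cell) (T : Finset (Finset Cell)) : Prop :=
  IsTilingOf n S T ∧ NorthernCond S T

/-- `S` is a horizontal `n`-ribbon strip. -/
def IsHStripCells (n : ℕ) (S : Finset Cell) : Prop :=
  IsSkewCells S ∧ ∃ T, IsHStripTiling n S T

/-- The spin of a horizontal `n`-ribbon strip (via its tiling, which is unique when it exists). -/
def stripSpin (n : ℕ) (S : Finset Cell) : ℕ :=
  if h : ∃ T, IsHStripTiling n S T then tilingSpin h.choose else 0

/-- Conjugate (transpose) of a set of cells. -/
def swapCells (S : Finset Cell) : Finset Cell := S.image Prod.swap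

/-- `S` is a vertical `n`-ribbon strip: its conjugate is a horizontal one. -/
def IsVStripCells (n : ℕ) (S : Finset Cell) : Prop :=
  IsHStripCells n (swapCells S)

/-- The spin of a vertical `n`-ribbon strip with `k = |S|/n` ribbons:
`k (n-1)` minus the spin of the conjugate strip. -/
def vStripSpin (n : ℕ) (S : Finset Cell) : ℕ :=
  (S.card / n) * (n - 1) - stripSpin n (swapCells S)

/-- `T` is a tiling of `S` witnessing that `S` is a vertical `n`-ribbon strip. -/
def IsVStripTiling (n : ℕ) (S : Finset Cell) (T : Finset (Finset Cell)) : Prop :=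
  IsHStripTiling n (swapCells S) (T.image swapCells)

/-- `mu` is obtained from `lam` by removing a single `n`-ribbon. -/
def RibbonStep (n : ℕ) (lam mu : YoungDiagram) : Prop :=
  mu ≤ lam ∧ IsRibbon n (lam.cells \ mu.cells)

/-- `delta` is the `n`-core of `lam`: it is obtained from `lam` by successively removing
`n`-ribbons, and no further `n`-ribbon can be removed from it. -/
def IsNCoreOf (n : ℕ) (delta lam : YoungDiagram) : Prop :=
  Relation.ReflTransGen (RibbonStep n) lam delta ∧ ∀ mu, ¬ RibbonStep n delta mu

/-- The `n`-core of a partition (defined via choice; it exists and is unique). -/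
def nCore (n : ℕ) (lam : YoungDiagram) : YoungDiagram :=
  if h : ∃ d, IsNCoreOf n d lam then h.choose else lam

/-- A semistandard `n`-ribbon tableau of shape `lam/mu` with entries in `{1, …, N}`:
a chain of partitions `mu = μ⁰ ⊆ μ¹ ⊆ ⋯ ⊆ μᴺ = lam` where each `μⁱ/μ^{i-1}` is a (possibly
empty) horizontal `n`-ribbon strip, together with the (unique) tiling of each strip. -/
structure RibbonTableau (n N : ℕ) (lam mu : YoungDiagram) where
  chain : Fin (N + 1) → YoungDiagram
  chain_zero : chain 0 = mu
  chain_last : chain (Fin.last N) = lam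
  chain_mono : ∀ i : Fin N, chain i.castSucc ≤ chain i.succ
  tiling : Fin N → Finset (Finset Cell)
  tiling_strip : ∀ i : Fin N,
    IsHStripTiling n ((chain i.succ).cells \ (chain i.castSucc).cells) (tiling i)

/-- The spin of a ribbon tableau. -/
def RibbonTableau.spin {n N : ℕ} {lam mu : YoungDiagram} (T : RibbonTableau n N lam mu) : ℕ :=
  ∑ i : Fin N, tilingSpin (T.tiling i)

/-- A standard ribbon tableau: each letter occurs exactly once. -/
def RibbonTableau.IsStandard {n N : ℕ} {lam mu : YoungDiagram}
    (T : RibbonTableau n N lam mu) : Prop :=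
  ∀ i : Fin N, (T.tiling i).card = 1

/-- The monomial `q^{spin T} x^{weight T}` attached to a ribbon tableau. -/
def tableauTerm {n N : ℕ} {lam mu : YoungDiagram} (T : RibbonTableau n N lam mu) :
    MvPolynomial (Fin N) (Polynomial ℤ) :=
  MvPolynomial.C (Polynomial.X ^ T.spin) *
    ∏ i : Fin N, MvPolynomial.X i ^ (T.tiling i).card

/-- The ribbon function `𝒢_{lam/mu}(x₁, …, x_N; q)`. -/
def ribbonFn (n N : ℕ) (lam mu : YoungDiagram) : MvPolynomial (Fin N) (Polynomial ℤ) :=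
  ∑ᶠ T : RibbonTableau n N lam mu, tableauTerm T

/-- `𝒢_lam = 𝒢_{lam/(n-core of lam)}`. -/
def G (n N : ℕ) (lam : YoungDiagram) : MvPolynomial (Fin N) (Polynomial ℤ) :=
  ribbonFn n N lam (nCore n lam)

/-- The Schur polynomial `s_ν(x₁,…,x_N)`, realized as the `n = 1` ribbon function
(1-ribbon tableaux are exactly semistandard Young tableaux, and all spins are 0). -/
def schurPoly (N : ℕ) (nu : YoungDiagram) : MvPolynomial (Fin N) (Polynomial ℤ) :=
  ribbonFn 1 N nu ⊥

/-- The cells of the `i`-th horizontal strip of a decomposition. -/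
def stripCells {len : ℕ} (strip : Fin len → Finset (Finset Cell)) (i : Fin len) : Finset Cell :=
  (strip i).biUnion id

/-- The cells of `lam` together with the strips up to (and including) `i`. -/
def partialCells {len : ℕ} (strip : Fin len → Finset (Finset Cell)) (lam : YoungDiagram)
    (i : Fin len) : Finset Cell :=
  lam.cells ∪ (Finset.univ.filter (fun j => j ≤ i)).biUnion (fun j => stripCells strip j)

/-- The union of the cells of the strips strictly before `i`. -/
def prevCells {len : ℕ} (strip : Fin len → Finset (Finset Cell)) (i : Fin len) : Finset Cell :=
  (Finset.univ.filter (fun j => j < i)).biUnion (fun j => stripCells strip j)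

/-- Two cell sets touch if some cell of one is adjacent to some cell of the other. -/
def Touches (A B : Finset Cell) : Prop :=
  ∃ a ∈ A, ∃ b ∈ B, Adj a b

/-- `R` is the rightmost ribbon within the cell set `C`. -/
def IsRightmostIn (R C : Finset Cell) : Prop :=
  ∃ c ∈ R, ∀ d ∈ C, d.2 ≤ c.2

/-- A border `n`-ribbon strip of shape `mu/lam`: the connected skew shape `mu/lam` with a
distinguished decomposition into disjoint non-empty horizontal `n`-ribbon strips
`T₁, …, T_len` (each recorded by its tiling) such that each partial union is a skew shape,
`T₁` is connected, and for `i ≥ 2` every connected component `C` of `Tᵢ` is such that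
`C ∪ (T₁ ∪ ⋯ ∪ T_{i-1})` is not a horizontal `n`-ribbon strip and only the rightmost
ribbon of `C` touches `T₁ ∪ ⋯ ∪ T_{i-1}`. -/
structure BorderRibbonStrip (n : ℕ) (lam mu : YoungDiagram) where
  len : ℕ
  len_pos : 1 ≤ len
  strip : Fin len → Finset (Finset Cell)
  sub : lam ≤ mu
  connected : CellsConnected (mu.cells \ lam.cells)
  nonempty : ∀ i, (strip i).Nonempty
  disj : ∀ i j, i ≠ j → Disjoint (stripCells strip i) (stripCells strip j)
  cover : Finset.univ.biUnion (fun i => stripCells strip i) = mu.cells \ lam.cells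
  shape : ∀ i, ∃ nu : YoungDiagram, nu.cells = partialCells strip lam i
  hstrips : ∀ i, IsHStripTiling n (stripCells strip i) (strip i)
  first_connected : CellsConnected (stripCells strip ⟨0, len_pos⟩)
  comp_cond : ∀ i : Fin len, 0 < (i : ℕ) → ∀ c ∈ stripCells strip i,
    (¬ IsHStripCells n (component (stripCells strip i) c ∪ prevCells strip i)) ∧
    (∀ R ∈ strip i, R ⊆ component (stripCells strip i) c →
      Touches R (prevCells strip i) → IsRightmostIn R (component (stripCells strip i) c))

/-- The height of a border ribbon strip: total number of connected components of its
horizontal strips, minus 1. -/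
def BorderRibbonStrip.height {n : ℕ} {lam mu : YoungDiagram}
    (S : BorderRibbonStrip n lam mu) : ℕ :=
  (∑ i : Fin S.len, numComponents (stripCells S.strip i)) - 1

/-- The spin of a border ribbon strip. -/
def BorderRibbonStrip.spin {n : ℕ} {lam mu : YoungDiagram}
    (S : BorderRibbonStrip n lam mu) : ℕ :=
  ∑ i : Fin S.len, tilingSpin (S.strip i)

/-- The size (number of ribbons) of a border ribbon strip. -/
def BorderRibbonStrip.size {n : ℕ} {lam mu : YoungDiagram}
    (S : BorderRibbonStrip n lam mu) : ℕ :=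
  ∑ i : Fin S.len, (S.strip i).card

/-- `𝒳^{mu/lam}_k(q) = Σ_S (-1)^{h(S)} q^{s(S)}` over border `n`-ribbon strips of shape
`mu/lam` with `k` ribbons. -/
def chiX (n k : ℕ) (lam mu : YoungDiagram) : Polynomial ℤ :=
  ∑ᶠ S : BorderRibbonStrip n lam mu,
    if S.size = k then (-1) ^ S.height * Polynomial.X ^ S.spin else 0

/-- The complete homogeneous symmetric polynomial of degree `k` evaluated at the family `v`. -/
def hPoly {ι R : Type*} [Fintype ι] [DecidableEq ι] [CommSemiring R] (k : ℕ) (v : ι → R) : R :=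
  ∑ d : Sym ι k, ((d : Multiset ι).map v).prod

/-- The elementary symmetric polynomial of degree `k` evaluated at the family `v`. -/
def ePoly {ι R : Type*} [Fintype ι] [DecidableEq ι] [CommSemiring R] (k : ℕ) (v : ι → R) : R :=
  ∑ s ∈ Finset.univ.powersetCard k, ∏ i ∈ s, v i

/-- The alphabet `A_q(x) = {q^{2j} x_i : 1 ≤ i ≤ N, 0 ≤ j ≤ n-1}`. -/
def alphabetVal (n N : ℕ) : Fin N × Fin n → MvPolynomial (Fin N) (Polynomial ℤ) :=
  fun p => MvPolynomial.C (Polynomial.X ^ (2 * (p.2 : ℕ))) * MvPolynomial.X p.1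

/-- The Schur function `s_lam` evaluated at the alphabet `A_q(x)`,
i.e. the plethysm `s_lam[(1+q²+⋯+q^{2n-2})X]` in `N` variables. -/
def schurAlph (n N : ℕ) (lam : YoungDiagram) : MvPolynomial (Fin N) (Polynomial ℤ) :=
  MvPolynomial.aeval
    (fun t : Fin (n * N) => alphabetVal n N (Prod.swap (finProdFinEquiv.symm t)))
    (schurPoly (n * N) lam)

end

namespace RibbonCauchy

/-! ### Bead configurations and the local operators -/

section Operators

variable {S : Type*} [CommRing S] (n : ℕ) (q : S)

/-- The bead configuration `s` with the positions `i` and `i + n` exchanged. -/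
def swapSt (i : ℤ) (s : Set ℤ) : Set ℤ := {z | Equiv.swap i (i + n) z ∈ s}

/-- The number of beads of `s` in the half-open interval `[a, b)`. -/
noncomputable def cnt (s : Set ℤ) (a b : ℤ) : ℕ := ((Finset.Ico a b).filter (· ∈ s)).card

theorem swapSt_swapSt (i : ℤ) (s : Set ℤ) : swapSt n i (swapSt n i s) = s := by
  ext z; simp [swapSt]

/-- `swapSt` as a permutation of the configurations. -/
def swapEquiv (i : ℤ) : Set ℤ ≃ Set ℤ :=
  ⟨swapSt n i, swapSt n i, swapSt_swapSt n i, swapSt_swapSt n i⟩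

theorem left_mem_swapSt (i : ℤ) (s : Set ℤ) : i ∈ swapSt n i s ↔ i + n ∈ s := by
  simp [swapSt]

theorem right_mem_swapSt (i : ℤ) (s : Set ℤ) : i + n ∈ swapSt n i s ↔ i ∈ s := by
  simp [swapSt]

theorem mem_swapSt_of_ne {i z : ℤ} (s : Set ℤ) (h1 : z ≠ i) (h2 : z ≠ i + n) :
    z ∈ swapSt n i s ↔ z ∈ s := by
  simp [swapSt, Equiv.swap_apply_of_ne_of_ne h1 h2]

/-- The operator adding an `n`-ribbon at position `i`: on basis vectors, it moves a bead from `i`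
to `i + n`, with weight `q` to the number of beads jumped over. It is written as an action on
arbitrary coefficient functions, which needs no finiteness: the value at `s` comes from the
configuration with the bead moved back. -/
noncomputable def uOp (i : ℤ) : Module.End S (Set ℤ → S) where
  toFun v s := if i + n ∈ s ∧ i ∉ s then q ^ cnt s (i + 1) (i + n) * v (swapSt n i s) else 0
  map_add' v w := by ext s; simp only [Pi.add_apply]; split_ifs <;> ring
  map_smul' c v := by
    ext s; simp only [Pi.smul_apply, smul_eq_mul, RingHom.id_apply]; split_ifs <;> ring

/-- The transpose of `uOp`: it removes an `n`-ribbon, moving a bead from `i + n` to `i`. -/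
noncomputable def dOp (i : ℤ) : Module.End S (Set ℤ → S) where
  toFun v s := if i ∈ s ∧ i + n ∉ s then q ^ cnt s (i + 1) (i + n) * v (swapSt n i s) else 0
  map_add' v w := by ext s; simp only [Pi.add_apply]; split_ifs <;> ring
  map_smul' c v := by
    ext s; simp only [Pi.smul_apply, smul_eq_mul, RingHom.id_apply]; split_ifs <;> ring

/-- The diagonal operator with eigenvalue `∏_{k ≤ j < n} (1 - w q^{2j})` on a configuration
having `k` beads in `[i, i + n)`. It interpolates between `1` far to the left, where all positions
are occupied, and the full Cauchy factor far to the right, where none is. -/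
noncomputable def cOp (w : S) (i : ℤ) : Module.End S (Set ℤ → S) where
  toFun v s := (∏ j ∈ Finset.Ico (cnt s i (i + n)) n, (1 - w * q ^ (2 * j))) * v s
  map_add' v w := by ext s; simp only [Pi.add_apply]; ring
  map_smul' c v := by
    ext s; simp only [Pi.smul_apply, smul_eq_mul, RingHom.id_apply]; ring

theorem cnt_congr {s s' : Set ℤ} {a b : ℤ} (h : ∀ z, a ≤ z → z < b → (z ∈ s ↔ z ∈ s')) :
    cnt s a b = cnt s' a b := by
  unfold cnt
  congr 1
  apply Finset.filter_congr
  intro z hz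
  rw [Finset.mem_Ico] at hz
  exact h z hz.1 hz.2

theorem cnt_swap_self (i : ℤ) (s : Set ℤ) :
    cnt (swapSt n i s) (i + 1) (i + n) = cnt s (i + 1) (i + n) :=
  cnt_congr fun _ h1 h2 => mem_swapSt_of_ne n s (by omega) (by omega)

theorem cnt_left (s : Set ℤ) {a b : ℤ} (h : a < b) :
    cnt s a b = (if a ∈ s then 1 else 0) + cnt s (a + 1) b := by
  unfold cnt
  have : Finset.Ico a b = insert a (Finset.Ico (a + 1) b) := by
    ext z; simp only [Finset.mem_Ico, Finset.mem_insert]; omega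
  rw [this, Finset.filter_insert]
  split_ifs with h
  · rw [Finset.card_insert_of_notMem (by simp)]; omega
  · omega

theorem cnt_right (s : Set ℤ) {a b : ℤ} (h : a ≤ b) :
    cnt s a (b + 1) = cnt s a b + (if b ∈ s then 1 else 0) := by
  unfold cnt
  have : Finset.Ico a (b + 1) = insert b (Finset.Ico a b) := by
    ext z; simp only [Finset.mem_Ico, Finset.mem_insert]; omega
  rw [this, Finset.filter_insert]
  split_ifs with h
  · rw [Finset.card_insert_of_notMem (by simp)]
  · omega

theorem cnt_le (s : Set ℤ) (i : ℤ) (m : ℕ) : cnt s i (i + m) ≤ m := by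
  unfold cnt
  refine (Finset.card_filter_le _ _).trans ?_
  simp

theorem cnt_insert {s s' : Set ℤ} {a b z₀ : ℤ} (h0 : z₀ ∉ s) (h1 : z₀ ∈ s')
    (h : ∀ z, z ≠ z₀ → a ≤ z → z < b → (z ∈ s ↔ z ∈ s')) :
    cnt s' a b = cnt s a b + (if a ≤ z₀ ∧ z₀ < b then 1 else 0) := by
  split_ifs with hz
  · have : (Finset.Ico a b).filter (· ∈ s') = insert z₀ ((Finset.Ico a b).filter (· ∈ s)) := by
      ext z
      simp only [Finset.mem_filter, Finset.mem_Ico, Finset.mem_insert]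
      by_cases e : z = z₀
      · subst e; simp [h1, hz]
      · simp only [e, false_or]
        constructor
        · rintro ⟨hh, h2⟩; exact ⟨hh, (h z e hh.1 hh.2).2 h2⟩
        · rintro ⟨hh, h2⟩; exact ⟨hh, (h z e hh.1 hh.2).1 h2⟩
    unfold cnt
    rw [this, Finset.card_insert_of_notMem (by simp [h0])]
  · rw [Nat.add_zero]
    refine (cnt_congr fun z h2 h3 => h z ?_ h2 h3).symm
    rintro rfl
    exact hz ⟨h2, h3⟩

/-- The number of beads in `[a, b)` after a bead has been moved from `j + n` to `j`. -/
theorem cnt_swap_down {j : ℤ} {s : Set ℤ} (h1 : j + n ∈ s) (h2 : j ∉ s) (a b : ℤ) :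
    cnt (swapSt n j s) a b + (if a ≤ j + n ∧ j + n < b then 1 else 0) =
      cnt s a b + (if a ≤ j ∧ j < b then 1 else 0) := by
  have hne : j ≠ j + n := fun h => h2 (h ▸ h1)
  have e1 : cnt s a b = cnt (s \ {j + (n : ℤ)}) a b + _ :=
    cnt_insert (z₀ := j + n) (by simp) h1 (fun z hz _ _ => by simp [hz])
  have e2 : cnt (swapSt n j s) a b = cnt (s \ {j + (n : ℤ)}) a b + _ :=
    cnt_insert (z₀ := j) (by simp [h2]) ((left_mem_swapSt n j s).2 h1) (fun z hz _ _ => by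
      by_cases hz' : z = j + n
      · subst hz'; simp [right_mem_swapSt, h2]
      · simp [mem_swapSt_of_ne n s hz hz', hz'])
  omega

/-- Adding at `j` commutes with removing at `i ≠ j`, weights included: moving one bead changes the
number of beads jumped over by the other one by the same amount in either order. -/
theorem d_comm_u {i j : ℤ} (hn : 1 ≤ n) (hij : i ≠ j) :
    dOp n q i * uOp n q j = uOp n q j * dOp n q i := by
  ext v s
  simp only [Module.End.mul_apply, uOp, dOp, LinearMap.coe_mk, AddHom.coe_mk]
  by_cases h1 : j = i + n
  · subst h1
    have a1 := right_mem_swapSt n i s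
    have a2 := left_mem_swapSt n (i + n) s
    split_ifs <;> simp_all
  by_cases h2 : i = j + n
  · subst h2
    have a1 := left_mem_swapSt n (j + n) s
    have a2 := right_mem_swapSt n j s
    split_ifs <;> simp_all
  have b1 : j ∈ swapSt n i s ↔ j ∈ s := mem_swapSt_of_ne n s (by omega) (by omega)
  have b2 : j + n ∈ swapSt n i s ↔ j + n ∈ s := mem_swapSt_of_ne n s (by omega) (by omega)
  have b3 : i ∈ swapSt n j s ↔ i ∈ s := mem_swapSt_of_ne n s (by omega) (by omega)
  have b4 : i + n ∈ swapSt n j s ↔ i + n ∈ s := mem_swapSt_of_ne n s (by omega) (by omega)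
  have b5 : swapSt n j (swapSt n i s) = swapSt n i (swapSt n j s) := by
    ext z
    simp only [swapSt, Set.mem_ofPred_eq]
    by_cases z1 : z = i
    · subst z1
      rw [Equiv.swap_apply_of_ne_of_ne (a := j) (x := z) (by omega) (by omega),
        Equiv.swap_apply_left, Equiv.swap_apply_of_ne_of_ne (a := j) (by omega) (by omega)]
    by_cases z2 : z = i + n
    · subst z2
      rw [Equiv.swap_apply_of_ne_of_ne (a := j) (x := i + n) (by omega) (by omega),
        Equiv.swap_apply_right, Equiv.swap_apply_of_ne_of_ne (a := j) (by omega) (by omega)]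
    rw [Equiv.swap_apply_of_ne_of_ne (a := i) (x := z) z1 z2]
    by_cases z3 : z = j
    · subst z3
      rw [Equiv.swap_apply_left, Equiv.swap_apply_of_ne_of_ne (by omega) (by omega)]
    by_cases z4 : z = j + n
    · subst z4
      rw [Equiv.swap_apply_right, Equiv.swap_apply_of_ne_of_ne (by omega) (by omega)]
    rw [Equiv.swap_apply_of_ne_of_ne z3 z4, Equiv.swap_apply_of_ne_of_ne z1 z2]
  rw [b1, b2, b3, b4, b5]
  by_cases c1 : i ∈ s ∧ i + n ∉ s
  · by_cases c2 : j + n ∈ s ∧ j ∉ s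
    · rw [if_pos c1, if_pos c2, if_pos c2, if_pos c1, ← mul_assoc, ← mul_assoc, ← pow_add,
        ← pow_add]
      have e1 := cnt_swap_down n c2.1 c2.2 (i + 1) (i + n)
      have e2 := cnt_swap_down n (j := i) (s := swapSt n i s)
        ((right_mem_swapSt n i s).2 c1.1) (fun h => c1.2 ((left_mem_swapSt n i s).1 h))
        (j + 1) (j + n)
      rw [swapSt_swapSt] at e2
      have p1 : (i + 1 ≤ j + n ∧ j + n < i + n) ↔ (j + 1 ≤ i ∧ i < j + n) := by omega
      have p2 : (i + 1 ≤ j ∧ j < i + n) ↔ (j + 1 ≤ i + n ∧ i + n < j + n) := by omega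
      simp only [p1, p2] at e1
      congr 2
      omega
    · rw [if_pos c1, if_neg c2, if_neg c2, mul_zero]
  · simp [if_neg c1]

/-- The local exchange relation: adding and removing at the same position `i` are exchanged at the
cost of shifting the diagonal operator by one. Only the occupation of `i` and `i + n` matters; when
exactly one of them is occupied, the eigenvalues of `cOp` at `i` and `i + 1` differ by the factor
`1 - x y q ^ (2 k)`, where `k` beads are jumped over. -/
theorem local_exchange (hn : 1 ≤ n) (x y : S) (i : ℤ) :
    (1 + y • dOp n q i) * cOp n q (x * y) (i + 1) * (1 + x • uOp n q i) =
      (1 + x • uOp n q i) * cOp n q (x * y) i * (1 + y • dOp n q i) := by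
  ext v s
  have hsum : ∀ s : Set ℤ, cnt s i (i + n) = (if i ∈ s then 1 else 0) + cnt s (i + 1) (i + n) :=
    fun s => cnt_left s (by omega)
  have hsum' : ∀ s : Set ℤ, cnt s (i + 1) (i + 1 + n) =
      cnt s (i + 1) (i + n) + (if i + n ∈ s then 1 else 0) := by
    intro s
    have := cnt_right s (a := i + 1) (b := i + n) (by omega)
    rw [← this]; congr 1; ring
  have hle : cnt s (i + 1) (i + n) < n := by
    have h := cnt_le (insert i s) i n
    rw [cnt_left (insert i s) (by omega)] at h
    have h' : cnt (insert i s) (i + 1) (i + n) = cnt s (i + 1) (i + n) :=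
      cnt_congr fun z h1 h2 => by simp [show z ≠ i by omega]
    rw [h'] at h
    simp at h
    omega
  have hprod := Finset.prod_eq_prod_Ico_succ_bot hle (fun j => (1 - x * y * q ^ (2 * j)))
  simp only [Module.End.mul_apply, uOp, dOp, cOp, LinearMap.coe_mk, AddHom.coe_mk,
    LinearMap.add_apply, LinearMap.smul_apply, Pi.add_apply, Pi.smul_apply, smul_eq_mul,
    Module.End.one_apply, hsum, hsum', cnt_swap_self, left_mem_swapSt, right_mem_swapSt,
    swapSt_swapSt]
  by_cases h1 : i ∈ s <;> by_cases h2 : i + n ∈ s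
  · simp [h1, h2, add_comm]
  · simp only [h1, h2, not_true, not_false_iff, and_self, if_true,
      if_false, add_zero, zero_add, mul_zero, add_comm 1 (cnt s (i + 1) (i + n))]
    rw [hprod]
    ring
  · simp only [h1, h2, not_true, not_false_iff, and_self, if_true,
      if_false, add_zero, zero_add, mul_zero, add_comm 1 (cnt s (i + 1) (i + n))]
    rw [hprod]
    ring
  · simp [h1, h2]

/-- The operator adding a horizontal ribbon strip, with weight `x` per ribbon, restricted to
ribbons starting in the window `[a, a + len)`: ribbons are added from left to right. -/
noncomputable def uWin (x : S) (a : ℤ) : ℕ → Module.End S (Set ℤ → S)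
  | 0 => 1
  | len + 1 => (1 + x • uOp n q (a + len)) * uWin x a len

/-- The transpose of `uWin`, removing a horizontal ribbon strip. -/
noncomputable def dWin (y : S) (a : ℤ) : ℕ → Module.End S (Set ℤ → S)
  | 0 => 1
  | len + 1 => dWin y a len * (1 + y • dOp n q (a + len))

theorem comm_one_add (hn : 1 ≤ n) (x y : S) {i j : ℤ} (hij : i ≠ j) :
    Commute (1 + y • dOp n q i) (1 + x • uOp n q j) := by
  have h : Commute (dOp n q i) (uOp n q j) := d_comm_u n q hn hij
  have h' : Commute (y • dOp n q i) (x • uOp n q j) := (h.smul_right x).smul_left y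
  exact ((Commute.one_left _).add_left ((Commute.one_right _).add_right h'))

theorem comm_dWin (hn : 1 ≤ n) (x y : S) (a j : ℤ) (len : ℕ) (h : a + len ≤ j) :
    Commute (dWin n q y a len) (1 + x • uOp n q j) := by
  induction len with
  | zero => exact Commute.one_left _
  | succ k ih =>
    exact (ih (by push_cast at h; omega)).mul_left
      (comm_one_add n q hn x y (by push_cast at h; omega))

theorem comm_uWin (hn : 1 ≤ n) (x y : S) (a j : ℤ) (len : ℕ) (h : a + len ≤ j) :
    Commute (1 + y • dOp n q j) (uWin n q x a len) := by
  induction len with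
  | zero => exact Commute.one_right _
  | succ k ih =>
    exact (comm_one_add n q hn x y (by push_cast at h; omega)).mul_right
      (ih (by push_cast at h; omega))

/-- The exchange relation for whole strips, by sliding the diagonal operator through the window. -/
theorem window_exchange (hn : 1 ≤ n) (x y : S) (a : ℤ) (len : ℕ) :
    dWin n q y a len * cOp n q (x * y) (a + len) * uWin n q x a len =
      uWin n q x a len * cOp n q (x * y) a * dWin n q y a len := by
  induction len with
  | zero => simp [dWin, uWin]
  | succ k ih =>
    have h1 := (comm_dWin n q hn x y a (a + k) k le_rfl).eq
    have h2 := (comm_uWin n q hn x y a (a + k) k le_rfl).eq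
    have h3 := local_exchange n q hn x y (a + k)
    simp only [dWin, uWin]
    have e : a + ((k + 1 : ℕ) : ℤ) = a + k + 1 := by push_cast; ring
    rw [e]
    generalize (1 + x • uOp n q (a + k)) = u at *
    generalize (1 + y • dOp n q (a + k)) = d at *
    calc dWin n q y a k * d * cOp n q (x * y) (a + k + 1) * (u * uWin n q x a k)
        = dWin n q y a k * (d * cOp n q (x * y) (a + k + 1) * u) * uWin n q x a k := by
          simp only [mul_assoc]
      _ = (dWin n q y a k * u) * cOp n q (x * y) (a + k) * (d * uWin n q x a k) := by
          rw [h3]; simp only [mul_assoc]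
      _ = u * (dWin n q y a k * cOp n q (x * y) (a + k) * uWin n q x a k) * d := by
          rw [h1, h2]; simp only [mul_assoc]
      _ = _ := by rw [ih]; simp only [mul_assoc]

end Operators

end RibbonCauchy

namespace RibbonCauchy

/-! ### The Cauchy identity for bead configurations -/

section Cauchy

variable {S : Type*} [CommRing S] (n : ℕ) (q : S)

/-- Configurations at distance at most `k` moves from a configuration that is full below `lo` and
empty from `hi` on: they are full below `lo - n k` and empty from `hi + n k` on. -/
def NearVac (lo hi : ℤ) (k : ℕ) (s : Set ℤ) : Prop :=
  (∀ z, z < lo - n * k → z ∈ s) ∧ (∀ z, hi + n * k ≤ z → z ∉ s)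

/-- Coefficient functions whose value at configurations that are more than `k` moves away from the
vacuum is divisible by `t ^ (k + 1)`. -/
def Good (t : S) (lo hi : ℤ) (v : Set ℤ → S) : Prop :=
  ∀ s k, ¬ NearVac n lo hi k s → t ^ (k + 1) ∣ v s

/-- The basis vector of a configuration. -/
noncomputable def basis (s₀ : Set ℤ) : Set ℤ → S := fun s => if s = s₀ then 1 else 0

variable {n q}

theorem good_basis {t : S} {lo hi : ℤ} {s₀ : Set ℤ} (h : NearVac n lo hi 0 s₀) :
    Good n t lo hi (basis s₀ : Set ℤ → S) := by
  intro s k hs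
  rw [basis, if_neg]
  · exact dvd_zero _
  · rintro rfl
    refine hs ⟨fun z hz => h.1 z ?_, fun z hz => h.2 z ?_⟩
    · have : (0 : ℤ) ≤ n * k := by positivity
      push_cast; omega
    · have : (0 : ℤ) ≤ n * k := by positivity
      push_cast; omega

theorem nearVac_swap {lo hi i : ℤ} {k : ℕ} {s : Set ℤ}
    (hi' : (i + n ∈ s ∧ i ∉ s) ∨ (i ∈ s ∧ i + n ∉ s))
    (h : NearVac n lo hi k (swapSt n i s)) : NearVac n lo hi (k + 1) s := by
  have a1 := left_mem_swapSt n i s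
  have a2 := right_mem_swapSt n i s
  have e : (n : ℤ) * ((k + 1 : ℕ) : ℤ) = n * k + n := by push_cast; ring
  constructor
  · intro z hz
    rw [e] at hz
    by_cases h1 : z = i
    · subst h1
      exact a2.1 (h.1 _ (by omega))
    by_cases h2 : z = i + n
    · subst h2
      exact a1.1 (h.1 _ (by omega))
    · exact (mem_swapSt_of_ne n s h1 h2).1 (h.1 _ (by omega))
  · intro z hz
    rw [e] at hz
    by_cases h1 : z = i
    · subst h1
      exact fun hh => h.2 _ (by omega) (a2.2 hh)
    by_cases h2 : z = i + n
    · subst h2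
      exact fun hh => h.2 _ (by omega) (a1.2 hh)
    · exact fun hh => h.2 _ (by omega) ((mem_swapSt_of_ne n s h1 h2).2 hh)

theorem good_step {t : S} {lo hi i : ℤ} {v : Set ℤ → S} (hv : Good n t lo hi v) {s : Set ℤ}
    (hi' : (i + n ∈ s ∧ i ∉ s) ∨ (i ∈ s ∧ i + n ∉ s)) {k : ℕ} (hs : ¬ NearVac n lo hi k s)
    (x c : S) : t ^ (k + 1) ∣ (t * x) * (c * v (swapSt n i s)) := by
  cases k with
  | zero => exact ⟨x * (c * v (swapSt n i s)), by ring⟩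
  | succ k =>
    obtain ⟨w, hw⟩ := hv (swapSt n i s) k (fun h => hs (nearVac_swap hi' h))
    exact ⟨x * c * w, by rw [hw]; ring⟩

theorem good_uWin {t : S} {lo hi : ℤ} {v : Set ℤ → S} (hv : Good n t lo hi v) (x : S) (a : ℤ)
    (len : ℕ) : Good n t lo hi (uWin n q (t * x) a len v) := by
  induction len generalizing v with
  | zero => simpa [uWin] using hv
  | succ k ih =>
    intro s m hs
    simp only [uWin, Module.End.mul_apply, LinearMap.add_apply, Module.End.one_apply,
      LinearMap.smul_apply, Pi.add_apply, Pi.smul_apply, smul_eq_mul]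
    refine dvd_add (ih hv s m hs) ?_
    simp only [uOp, LinearMap.coe_mk, AddHom.coe_mk]
    split_ifs with h
    · exact good_step (ih hv) (Or.inl h) hs _ _
    · simp

theorem good_dWin {t : S} {lo hi : ℤ} {v : Set ℤ → S} (hv : Good n t lo hi v) (x : S) (a : ℤ)
    (len : ℕ) : Good n t lo hi (dWin n q (t * x) a len v) := by
  induction len generalizing v with
  | zero => simpa [dWin] using hv
  | succ k ih =>
    simp only [dWin, Module.End.mul_apply]
    apply ih
    intro s m hs
    simp only [LinearMap.add_apply, Module.End.one_apply,
      LinearMap.smul_apply, Pi.add_apply, Pi.smul_apply, smul_eq_mul]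
    refine dvd_add (hv s m hs) ?_
    simp only [dOp, LinearMap.coe_mk, AddHom.coe_mk]
    split_ifs with h
    · exact good_step hv (Or.inr h) hs _ _
    · simp

theorem good_eq_zero {t : S} {K : ℕ} (ht : t ^ (K + 1) = 0) {lo hi : ℤ} {v : Set ℤ → S}
    (hv : Good n t lo hi v) {s : Set ℤ} (hs : ¬ NearVac n lo hi K s) : v s = 0 := by
  have := hv s K hs
  rwa [ht, zero_dvd_iff] at this

/-- On truncated coefficient functions, far to the right `cOp` is the full Cauchy factor. -/
theorem cOp_right {t : S} {K : ℕ} (ht : t ^ (K + 1) = 0) {lo hi : ℤ} {v : Set ℤ → S}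
    (hv : Good n t lo hi v) (w : S) {b : ℤ} (hb : hi + n * K ≤ b) :
    cOp n q w b v = (∏ j ∈ Finset.range n, (1 - w * q ^ (2 * j))) • v := by
  ext s
  simp only [cOp, LinearMap.coe_mk, AddHom.coe_mk, Pi.smul_apply, smul_eq_mul]
  by_cases hs : NearVac n lo hi K s
  · have : cnt s b (b + n) = 0 := by
      rw [cnt, Finset.card_eq_zero, Finset.filter_eq_empty_iff]
      intro z hz
      rw [Finset.mem_Ico] at hz
      exact hs.2 z (by omega)
    rw [this, Finset.range_eq_Ico]
  · rw [good_eq_zero ht hv hs]; simp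

/-- On truncated coefficient functions, far to the left `cOp` is the identity. -/
theorem cOp_left {t : S} {K : ℕ} (ht : t ^ (K + 1) = 0) {lo hi : ℤ} {v : Set ℤ → S}
    (hv : Good n t lo hi v) (w : S) {a : ℤ} (ha : a + n ≤ lo - n * K) :
    cOp n q w a v = v := by
  ext s
  simp only [cOp, LinearMap.coe_mk, AddHom.coe_mk]
  by_cases hs : NearVac n lo hi K s
  · have : cnt s a (a + n) = n := by
      rw [cnt, Finset.filter_true_of_mem]
      · simp
      intro z hz
      rw [Finset.mem_Ico] at hz
      exact hs.1 z (by omega)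
    rw [this]; simp
  · rw [good_eq_zero ht hv hs]; simp

/-- The commutation relation between adding and removing strips, on truncated functions. -/
theorem dWin_uWin (hn : 1 ≤ n) {t : S} {K : ℕ} (ht : t ^ (K + 1) = 0) {lo hi : ℤ}
    {v : Set ℤ → S} (hv : Good n t lo hi v) (x y : S) {a : ℤ} {len : ℕ}
    (ha : a + n ≤ lo - n * K) (hb : hi + n * K ≤ a + len) :
    (∏ j ∈ Finset.range n, (1 - (t * x) * (t * y) * q ^ (2 * j))) •
      dWin n q (t * y) a len (uWin n q (t * x) a len v) =
      uWin n q (t * x) a len (dWin n q (t * y) a len v) := by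
  have h := congrArg (fun f => f v) (window_exchange n q hn (t * x) (t * y) a len)
  simp only [Module.End.mul_apply] at h
  rw [cOp_right ht (good_uWin hv x a len) _ hb, cOp_left ht (good_dWin hv y a len) _ ha,
    map_smul] at h
  exact h

variable (n q)

/-- Adding `N` successive strips, the `i`-th one with weight `x i` per ribbon. -/
noncomputable def uAll (a : ℤ) (len : ℕ) : (N : ℕ) → (Fin N → S) → Module.End S (Set ℤ → S)
  | 0, _ => 1
  | N + 1, x => uWin n q (x (Fin.last N)) a len * uAll a len N (fun i => x i.castSucc)

/-- The transpose of `uAll`. -/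
noncomputable def dAll (a : ℤ) (len : ℕ) : (N : ℕ) → (Fin N → S) → Module.End S (Set ℤ → S)
  | 0, _ => 1
  | N + 1, y => dAll a len N (fun i => y i.castSucc) * dWin n q (y (Fin.last N)) a len

variable {n q}

theorem good_uAll {t : S} {lo hi : ℤ} {v : Set ℤ → S} (hv : Good n t lo hi v) (a : ℤ)
    (len N : ℕ) (x : Fin N → S) : Good n t lo hi (uAll n q a len N (fun i => t * x i) v) := by
  induction N with
  | zero => simpa [uAll] using hv
  | succ N ih =>
    simp only [uAll, Module.End.mul_apply]
    exact good_uWin (ih _) _ _ _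

theorem dWin_uAll (hn : 1 ≤ n) {t : S} {K : ℕ} (ht : t ^ (K + 1) = 0) {lo hi : ℤ}
    {v : Set ℤ → S} (hv : Good n t lo hi v) (y : S) {a : ℤ} {len : ℕ}
    (hvy : dWin n q (t * y) a len v = v)
    (ha : a + n ≤ lo - n * K) (hb : hi + n * K ≤ a + len) (N : ℕ) (x : Fin N → S) :
    (∏ i, ∏ j ∈ Finset.range n, (1 - (t * x i) * (t * y) * q ^ (2 * j))) •
      dWin n q (t * y) a len (uAll n q a len N (fun i => t * x i) v) =
      uAll n q a len N (fun i => t * x i) v := by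
  induction N with
  | zero => simpa [uAll] using hvy
  | succ N ih =>
    simp only [uAll, Module.End.mul_apply]
    have h1 := dWin_uWin (q := q) hn ht (good_uAll (q := q) hv a len N (fun i => x i.castSucc))
      (x (Fin.last N)) y ha hb
    rw [Fin.prod_univ_castSucc, mul_smul, h1, ← map_smul, ih]

theorem dAll_uAll (hn : 1 ≤ n) {t : S} {K : ℕ} (ht : t ^ (K + 1) = 0) {lo hi : ℤ}
    {v : Set ℤ → S} (hv : Good n t lo hi v) {a : ℤ} {len : ℕ}
    (hvy : ∀ y, dWin n q (t * y) a len v = v)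
    (ha : a + n ≤ lo - n * K) (hb : hi + n * K ≤ a + len) (N N' : ℕ) (x : Fin N → S)
    (y : Fin N' → S) :
    (∏ k, ∏ i, ∏ j ∈ Finset.range n, (1 - (t * x i) * (t * y k) * q ^ (2 * j))) •
      dAll n q a len N' (fun k => t * y k) (uAll n q a len N (fun i => t * x i) v) =
      uAll n q a len N (fun i => t * x i) v := by
  induction N' with
  | zero => simp [dAll]
  | succ N' ih =>
    simp only [dAll, Module.End.mul_apply]
    rw [Fin.prod_univ_castSucc, mul_smul, ← map_smul, dWin_uAll hn ht hv _ (hvy _) ha hb, ih]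

/-- A configuration admitting no ribbon removal is fixed by the removal operators. -/
theorem dWin_core {s₀ : Set ℤ} (hs : ∀ i, i + (n : ℤ) ∈ s₀ → i ∈ s₀) (y : S) (a : ℤ) (len : ℕ) :
    dWin n q y a len (basis s₀) = basis s₀ := by
  induction len with
  | zero => simp [dWin]
  | succ k ih =>
    have : dOp n q (a + k) (basis s₀) = 0 := by
      ext s
      simp only [dOp, LinearMap.coe_mk, AddHom.coe_mk, Pi.zero_apply, basis]
      split_ifs with h1 h2
      · exfalso
        have := hs (a + k)
        rw [← h2, left_mem_swapSt, right_mem_swapSt] at this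
        exact h1.2 (this h1.1)
      · simp
      · rfl
    simp [dWin, this, ih]

theorem uWin_core {s₀ : Set ℤ} (hs : ∀ i, i + (n : ℤ) ∈ s₀ → i ∈ s₀) (x : S) (a : ℤ) (len : ℕ)
    (v : Set ℤ → S) : uWin n q x a len v s₀ = v s₀ := by
  induction len with
  | zero => simp [uWin]
  | succ k ih =>
    have : ¬ (a + k + (n : ℤ) ∈ s₀ ∧ a + k ∉ s₀) := fun h => h.2 (hs _ h.1)
    simp [uWin, uOp, this, ih]

theorem uAll_core {s₀ : Set ℤ} (hs : ∀ i, i + (n : ℤ) ∈ s₀ → i ∈ s₀) (a : ℤ) (len N : ℕ)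
    (x : Fin N → S) (v : Set ℤ → S) : uAll n q a len N x v s₀ = v s₀ := by
  induction N with
  | zero => simp [uAll]
  | succ k ih => simp [uAll, uWin_core hs, ih]

/-- The support of a function obtained by adding strips lies in any class of configurations closed
under ribbon addition. -/
theorem uWin_support {Q : Set ℤ → Prop}
    (hQ : ∀ s i, Q s → i ∈ s → i + (n : ℤ) ∉ s → Q (swapSt n i s)) (x : S) (a : ℤ) (len : ℕ)
    {v : Set ℤ → S} (hv : ∀ s, v s ≠ 0 → Q s) : ∀ s, uWin n q x a len v s ≠ 0 → Q s := by
  induction len with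
  | zero => simpa [uWin] using hv
  | succ k ih =>
    intro s hs
    simp only [uWin, Module.End.mul_apply, LinearMap.add_apply, Module.End.one_apply,
      LinearMap.smul_apply, Pi.add_apply, Pi.smul_apply, smul_eq_mul, uOp, LinearMap.coe_mk,
      AddHom.coe_mk] at hs
    by_cases h : uWin n q x a k v s = 0
    · rw [h, zero_add] at hs
      split_ifs at hs with h1
      · have h2 : uWin n q x a k v (swapSt n (a + k) s) ≠ 0 := by
          intro h2; rw [h2] at hs; simp at hs
        have := hQ _ (a + k) (ih _ h2) (by rw [left_mem_swapSt]; exact h1.1)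
          (by rw [right_mem_swapSt]; exact h1.2)
        rwa [swapSt_swapSt] at this
      · simp at hs
    · exact ih s h

theorem uAll_support {Q : Set ℤ → Prop}
    (hQ : ∀ s i, Q s → i ∈ s → i + (n : ℤ) ∉ s → Q (swapSt n i s)) (a : ℤ) (len N : ℕ)
    (x : Fin N → S) {v : Set ℤ → S} (hv : ∀ s, v s ≠ 0 → Q s) :
    ∀ s, uAll n q a len N x v s ≠ 0 → Q s := by
  induction N with
  | zero => simpa [uAll] using hv
  | succ N ih =>
    simp only [uAll, Module.End.mul_apply]
    exact uWin_support hQ _ _ _ (ih _)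

theorem support_uOp (i : ℤ) {v : Set ℤ → S} (hv : v.support.Finite) :
    (uOp n q i v).support.Finite := by
  refine (hv.image (swapSt n i)).subset ?_
  intro s hs
  refine ⟨swapSt n i s, ?_, swapSt_swapSt n i s⟩
  intro h
  apply hs
  simp [uOp, h]

theorem support_smul {c : S} {v : Set ℤ → S} (hv : v.support.Finite) :
    (c • v).support.Finite := hv.subset (Function.support_const_smul_subset c v)

theorem support_uWin (x : S) (a : ℤ) (len : ℕ) {v : Set ℤ → S} (hv : v.support.Finite) :
    (uWin n q x a len v).support.Finite := by
  induction len with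
  | zero => simpa [uWin] using hv
  | succ k ih =>
    simp only [uWin, Module.End.mul_apply, LinearMap.add_apply, Module.End.one_apply,
      LinearMap.smul_apply]
    exact (ih.union (support_smul (support_uOp _ ih))).subset (Function.support_add _ _)

theorem support_uAll (a : ℤ) (len N : ℕ) (x : Fin N → S) {v : Set ℤ → S}
    (hv : v.support.Finite) : (uAll n q a len N x v).support.Finite := by
  induction N with
  | zero => simpa [uAll] using hv
  | succ N ih =>
    simp only [uAll, Module.End.mul_apply]
    exact support_uWin _ _ _ (ih _)

theorem support_mul_left {v : Set ℤ → S} (hv : v.support.Finite) (w : Set ℤ → S) :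
    (Function.support fun s => v s * w s).Finite :=
  hv.subset fun s hs h => hs (by simp [h])

/-- `uOp` and `dOp` are adjoint. -/
theorem pair_uOp (i : ℤ) (v w : Set ℤ → S) :
    ∑ᶠ s, uOp n q i v s * w s = ∑ᶠ s, v s * dOp n q i w s := by
  rw [← finsum_comp_equiv (swapEquiv n i)]
  apply finsum_congr
  intro s
  simp only [swapEquiv, Equiv.coe_fn_mk, uOp, dOp, LinearMap.coe_mk, AddHom.coe_mk,
    left_mem_swapSt, right_mem_swapSt, swapSt_swapSt, cnt_swap_self]
  split_ifs <;> ring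

theorem pair_uWin (x : S) (a : ℤ) (len : ℕ) {v : Set ℤ → S} (hv : v.support.Finite)
    (w : Set ℤ → S) :
    ∑ᶠ s, uWin n q x a len v s * w s = ∑ᶠ s, v s * dWin n q x a len w s := by
  induction len generalizing w with
  | zero => simp [uWin, dWin]
  | succ k ih =>
    have hf := support_uWin (n := n) (q := q) x a k hv
    simp only [uWin, dWin, Module.End.mul_apply]
    rw [← ih]
    generalize uWin n q x a k v = v' at *
    simp only [LinearMap.add_apply, Module.End.one_apply,
      LinearMap.smul_apply, Pi.add_apply, Pi.smul_apply, smul_eq_mul, add_mul, mul_add]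
    rw [finsum_add_distrib (support_mul_left hf w), finsum_add_distrib (support_mul_left hf w)]
    · congr 1
      have e1 : ∀ s, x * uOp n q (a + k) v' s * w s = x * (uOp n q (a + k) v' s * w s) :=
        fun s => by ring
      have e2 : ∀ s, v' s * (x * dOp n q (a + k) w s) = x * (v' s * dOp n q (a + k) w s) :=
        fun s => by ring
      simp only [e1, e2]
      rw [← mul_finsum' _ _ (support_mul_left (support_uOp _ hf) w),
        ← mul_finsum' _ _ (support_mul_left hf _), pair_uOp]
    · exact support_mul_left hf _
    · exact support_mul_left (support_smul (c := x) (support_uOp _ hf)) w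

theorem pair_uAll (a : ℤ) (len N : ℕ) (x : Fin N → S) {v : Set ℤ → S} (hv : v.support.Finite)
    (w : Set ℤ → S) :
    ∑ᶠ s, uAll n q a len N x v s * w s = ∑ᶠ s, v s * dAll n q a len N x w s := by
  induction N generalizing w with
  | zero => simp [uAll, dAll]
  | succ N ih =>
    simp only [uAll, dAll, Module.End.mul_apply]
    rw [pair_uWin _ _ _ (support_uAll _ _ _ _ hv), ih]

theorem support_basis (s₀ : Set ℤ) : (basis s₀ : Set ℤ → S).support.Finite := by
  refine (Set.finite_singleton s₀).subset fun s hs => ?_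
  by_contra h
  exact hs (if_neg h)

/-- The Cauchy identity for bead configurations, truncated at `t ^ (K + 1) = 0`: by adjointness the
pairing is the coefficient at `s₀` of `dAll (uAll (basis s₀))`, and after exchanging the operators
`dAll` acts trivially because no ribbon can be removed from `s₀`. -/
theorem bead_cauchy (hn : 1 ≤ n) {t : S} {K : ℕ} (ht : t ^ (K + 1) = 0) {lo hi : ℤ}
    {s₀ : Set ℤ} (h0 : NearVac n lo hi 0 s₀) (hs : ∀ i, i + (n : ℤ) ∈ s₀ → i ∈ s₀)
    {a : ℤ} {len : ℕ} (ha : a + n ≤ lo - n * K) (hb : hi + n * K ≤ a + len) (N N' : ℕ)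
    (x : Fin N → S) (y : Fin N' → S) :
    (∏ k, ∏ i, ∏ j ∈ Finset.range n, (1 - (t * x i) * (t * y k) * q ^ (2 * j))) *
      ∑ᶠ s, uAll n q a len N (fun i => t * x i) (basis s₀) s *
        uAll n q a len N' (fun i => t * y i) (basis s₀) s = 1 := by
  have h1 := pair_uAll (q := q) (n := n) a len N' (fun i => t * y i) (support_basis s₀)
    (uAll n q a len N (fun i => t * x i) (basis s₀))
  have h2 := congrFun (dAll_uAll (q := q) hn ht (good_basis h0) (fun y => dWin_core hs _ a len)
    ha hb N N' x y) s₀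
  rw [uAll_core hs] at h2
  simp only [Pi.smul_apply, smul_eq_mul] at h2
  have h3 : ∀ w : Set ℤ → S, ∑ᶠ s, (basis s₀ : Set ℤ → S) s * w s = w s₀ := by
    intro w
    rw [finsum_eq_single _ s₀]
    · simp [basis]
    · intro s hs; simp [basis, hs]
  rw [h3] at h1
  rw [← h1] at h2
  simp only [mul_comm (uAll n q a len N (fun i => t * x i) (basis s₀) _)]
  rw [h2]
  simp [basis]

end Cauchy

end RibbonCauchy

namespace RibbonCauchy

/-! ### Young diagrams as bead configurations -/

section Beads

theorem diagN_aux (μ : YoungDiagram) (k : ℤ) : ∃ r : ℕ, (μ.rowLen r : ℤ) ≤ r + k := by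
  refine ⟨((μ.rowLen 0 : ℤ) - k).toNat, ?_⟩
  have := μ.rowLen_anti 0 ((μ.rowLen 0 : ℤ) - k).toNat (Nat.zero_le _)
  omega

/-- The row in which the first cell of content `k` outside `μ` lies (a cell in a possibly negative
column, when `k` is very negative). Equivalently, the number of beads of `μ` greater than `k`. -/
noncomputable def diagN (μ : YoungDiagram) (k : ℤ) : ℕ := Nat.find (diagN_aux μ k)

theorem lt_diagN (μ : YoungDiagram) (k : ℤ) (r : ℕ) :
    r < diagN μ k ↔ (r : ℤ) + k < μ.rowLen r := by
  rw [diagN, Nat.lt_find_iff]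
  constructor
  · intro h; simpa using h r le_rfl
  · intro h m hm
    have := μ.rowLen_anti m r hm
    omega

theorem mem_iff_diagN (μ : YoungDiagram) (c : Cell) : c ∈ μ.cells ↔ c.1 < diagN μ (c.2 - c.1) := by
  rw [lt_diagN, YoungDiagram.mem_cells]
  obtain ⟨r, s⟩ := c
  rw [YoungDiagram.mem_iff_lt_rowLen]
  simp

theorem neg_le_diagN (μ : YoungDiagram) (k : ℤ) : -k ≤ diagN μ k := by
  by_contra h
  push Not at h
  have := (lt_diagN μ k (diagN μ k)).not.1 (lt_irrefl _)
  omega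

theorem diagN_step (μ : YoungDiagram) (k : ℤ) :
    diagN μ k ≤ diagN μ (k - 1) ∧ diagN μ (k - 1) ≤ diagN μ k + 1 := by
  constructor
  · by_contra h
    push Not at h
    rw [lt_diagN] at h
    have := (lt_diagN μ (k - 1) (diagN μ (k - 1))).not.1 (lt_irrefl _)
    omega
  · by_contra h
    push Not at h
    rw [lt_diagN] at h
    have := (lt_diagN μ k (diagN μ k)).not.1 (lt_irrefl _)
    have := μ.rowLen_anti (diagN μ k) (diagN μ k + 1) (by omega)
    push_cast at h
    omega

/-- The bead configuration of a partition: the positions `μ_r - r`. -/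
def beads (μ : YoungDiagram) : Set ℤ := {z | ∃ r : ℕ, z = (μ.rowLen r : ℤ) - r}

theorem mem_beads (μ : YoungDiagram) (z : ℤ) :
    z ∈ beads μ ↔ diagN μ (z - 1) = diagN μ z + 1 := by
  have hs := diagN_step μ z
  constructor
  · rintro ⟨r, hr⟩
    have h1 : r < diagN μ (z - 1) := by rw [lt_diagN]; omega
    have h2 : ¬ r < diagN μ z := by rw [lt_diagN]; omega
    omega
  · intro h
    refine ⟨diagN μ z, ?_⟩
    have h1 : diagN μ z < diagN μ (z - 1) := by omega
    have h2 : ¬ diagN μ z < diagN μ z := lt_irrefl _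
    rw [lt_diagN] at h1 h2
    omega

theorem not_mem_beads (μ : YoungDiagram) (z : ℤ) :
    z ∉ beads μ ↔ diagN μ (z - 1) = diagN μ z := by
  rw [mem_beads]
  have hs := diagN_step μ z
  omega

theorem diagN_injective {μ ν : YoungDiagram} (h : ∀ k, diagN μ k = diagN ν k) : μ = ν := by
  ext c
  rw [mem_iff_diagN, mem_iff_diagN, h]

theorem diagN_bound (μ : YoungDiagram) :
    ∃ Z : ℕ, (∀ k : ℤ, Z ≤ k → diagN μ k = 0) ∧ (∀ k : ℤ, k ≤ -Z → (diagN μ k : ℤ) = -k) := by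
  refine ⟨μ.rowLen 0 + μ.colLen 0, fun k hk => ?_, fun k hk => ?_⟩
  · by_contra h
    have : 0 < diagN μ k := by omega
    rw [lt_diagN] at this
    push_cast at *
    omega
  · have h1 := neg_le_diagN μ k
    have h2 : ¬ (-k).toNat < diagN μ k := by
      rw [lt_diagN]
      have : μ.rowLen (-k).toNat = 0 := by
        by_contra h0
        have h3 : ((-k).toNat, 0) ∈ μ := by rw [YoungDiagram.mem_iff_lt_rowLen]; omega
        rw [YoungDiagram.mem_iff_lt_colLen] at h3
        push_cast at hk
        omega
      rw [this]
      push_cast at hk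
      omega
    omega

theorem beads_injective : Function.Injective beads := by
  intro μ ν h
  obtain ⟨Z, hZ, -⟩ := diagN_bound μ
  obtain ⟨Z', hZ', -⟩ := diagN_bound ν
  apply diagN_injective
  have key : ∀ m : ℕ, diagN μ ((Z : ℤ) + Z' - m) = diagN ν ((Z : ℤ) + Z' - m) := by
    intro m
    induction m with
    | zero => rw [hZ _ (by push_cast; omega), hZ' _ (by push_cast; omega)]
    | succ m ih =>
      have e : (Z : ℤ) + Z' - (m + 1 : ℕ) = (Z : ℤ) + Z' - m - 1 := by push_cast; ring
      rw [e]
      by_cases hz : (Z : ℤ) + Z' - m ∈ beads μ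
      · rw [(mem_beads _ _).1 hz, (mem_beads _ _).1 (h ▸ hz), ih]
      · rw [(not_mem_beads _ _).1 hz, (not_mem_beads _ _).1 (h ▸ hz), ih]
  intro k
  by_cases hk : k ≤ (Z : ℤ) + Z'
  · have := key ((Z : ℤ) + Z' - k).toNat
    rwa [show (Z : ℤ) + Z' - (((Z : ℤ) + Z' - k).toNat : ℤ) = k by omega] at this
  · rw [hZ _ (by omega), hZ' _ (by omega)]

/-- A set of cells closed under going one step left or one step up is a lower set. -/
theorem isLowerSet_of_step {A : Set Cell} (h1 : ∀ r s, (r, s + 1) ∈ A → (r, s) ∈ A)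
    (h2 : ∀ r s, (r + 1, s) ∈ A → (r, s) ∈ A) : IsLowerSet A := by
  have k1 : ∀ d r s, (r, s + d) ∈ A → (r, s) ∈ A := by
    intro d
    induction d with
    | zero => exact fun r s h => h
    | succ d ih => exact fun r s h => ih r s (h1 _ _ h)
  have k2 : ∀ d r s, (r + d, s) ∈ A → (r, s) ∈ A := by
    intro d
    induction d with
    | zero => exact fun r s h => h
    | succ d ih => exact fun r s h => ih r s (h2 _ _ h)
  rintro ⟨r, s⟩ ⟨r', s'⟩ hle h
  obtain ⟨hr, hs⟩ := Prod.mk_le_mk.1 hle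
  obtain ⟨d, rfl⟩ := Nat.exists_eq_add_of_le hr
  obtain ⟨e, rfl⟩ := Nat.exists_eq_add_of_le hs
  exact k1 e _ _ (k2 d _ _ h)

/-- Every admissible boundary function is the function `diagN` of a Young diagram. -/
theorem exists_diagN (f : ℤ → ℕ) (hf : ∀ k, f k ≤ f (k - 1) ∧ f (k - 1) ≤ f k + 1) (Z : ℕ)
    (h1 : ∀ k : ℤ, Z ≤ k → f k = 0) (h2 : ∀ k : ℤ, k ≤ -Z → (f k : ℤ) = -k) :
    ∃ μ : YoungDiagram, ∀ k, diagN μ k = f k := by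
  have lower : ∀ m : ℕ, (Z : ℤ) - m ≤ f (-Z + m) := by
    intro m
    induction m with
    | zero => have := h2 (-Z) le_rfl; simp only [Nat.cast_zero, add_zero]; omega
    | succ m ih =>
      have := hf (-Z + (m + 1 : ℕ))
      rw [show (-Z : ℤ) + (m + 1 : ℕ) - 1 = -Z + m by push_cast; ring] at this
      push_cast at *
      omega
  have upper : ∀ m : ℕ, f (-Z + m) ≤ Z := by
    intro m
    induction m with
    | zero => have := h2 (-Z) le_rfl; simp only [Nat.cast_zero, add_zero]; omega
    | succ m ih =>
      have := hf (-Z + (m + 1 : ℕ))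
      rw [show (-Z : ℤ) + (m + 1 : ℕ) - 1 = -Z + m by push_cast; ring] at this
      omega
  have hlow : ∀ k, -k ≤ f k := by
    intro k
    by_cases hk : k ≤ -Z
    · rw [h2 k hk]
    · have := lower (k + Z).toNat
      rw [show (-Z : ℤ) + (k + Z).toNat = k by omega] at this
      omega
  have hup : ∀ k, -(Z : ℤ) ≤ k → f k ≤ Z := by
    intro k hk
    have := upper (k + Z).toNat
    rwa [show (-Z : ℤ) + (k + Z).toNat = k by omega] at this
  let A : Finset Cell := (Finset.range (2 * Z + 1) ×ˢ Finset.range (2 * Z + 1)).filter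
    (fun c => c.1 < f ((c.2 : ℤ) - c.1))
  have hA : ∀ c : Cell, c ∈ A ↔ c.1 < f ((c.2 : ℤ) - c.1) := by
    rintro ⟨r, s⟩
    simp only [A, Finset.mem_filter, Finset.mem_product, Finset.mem_range, and_iff_right_iff_imp]
    intro h
    have h3 : (s : ℤ) - r < Z := by
      by_contra h3
      rw [h1 _ (by omega)] at h
      omega
    have h4 : -(Z : ℤ) < (s : ℤ) - r := by
      by_contra h4
      have := h2 ((s : ℤ) - r) (by omega)
      omega
    have := hup _ h4.le
    omega
  have hl : IsLowerSet (A : Set Cell) := by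
    apply isLowerSet_of_step
    · intro r s h
      rw [Finset.mem_coe, hA] at *
      have := hf (((s + 1 : ℕ) : ℤ) - r)
      rw [show ((s + 1 : ℕ) : ℤ) - r - 1 = s - r by push_cast; ring] at this
      simp only at *
      omega
    · intro r s h
      rw [Finset.mem_coe, hA] at *
      have := hf ((s : ℤ) - r)
      rw [show ((s : ℕ) : ℤ) - r - 1 = s - (r + 1 : ℕ) by push_cast; ring] at this
      simp only at *
      omega
  refine ⟨⟨A, hl⟩, fun k => ?_⟩
  have key : ∀ r : ℕ, r < diagN ⟨A, hl⟩ k ↔ r < f k := by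
    intro r
    by_cases hr : 0 ≤ (r : ℤ) + k
    · have h := mem_iff_diagN ⟨A, hl⟩ (r, ((r : ℤ) + k).toNat)
      have e : ((((r : ℤ) + k).toNat : ℕ) : ℤ) - r = k := by omega
      simp only [hA, e] at h
      exact h.symm
    · have := hlow k
      have := neg_le_diagN ⟨A, hl⟩ k
      omega
  exact le_antisymm (not_lt.1 fun h => lt_irrefl _ ((key _).1 h))
    (not_lt.1 fun h => lt_irrefl _ ((key _).2 h))

/-- `μ` arises from `ν` by adding one cell on each of the diagonals `i, …, i + n - 1`, that is, by
moving a bead from `i` to `i + n`. -/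
def BeadStep (n : ℕ) (i : ℤ) (ν μ : YoungDiagram) : Prop :=
  ∀ k, diagN μ k = diagN ν k + if i ≤ k ∧ k < i + n then 1 else 0

theorem BeadStep.beads_iff {n : ℕ} {i : ℤ} {ν μ : YoungDiagram} (hn : 1 ≤ n)
    (h : BeadStep n i ν μ) :
    i ∈ beads ν ∧ i + n ∉ beads ν ∧ i ∉ beads μ ∧ i + n ∈ beads μ ∧
      swapSt n i (beads ν) = beads μ := by
  have a1 := h (i - 1)
  have a2 := h i
  have a3 := h (i + n - 1)
  have a4 := h (i + n)
  rw [if_neg (by omega)] at a1 a4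
  rw [if_pos (by omega)] at a2 a3
  have s1 := diagN_step ν i
  have s2 := diagN_step μ i
  have s3 := diagN_step ν (i + n)
  have s4 := diagN_step μ (i + n)
  have b1 : i ∈ beads ν := by rw [mem_beads]; omega
  have b2 : i + n ∉ beads ν := by rw [not_mem_beads]; omega
  have b3 : i ∉ beads μ := by rw [not_mem_beads]; omega
  have b4 : i + n ∈ beads μ := by rw [mem_beads]; omega
  refine ⟨b1, b2, b3, b4, ?_⟩
  ext z
  by_cases z1 : z = i
  · subst z1; simp [left_mem_swapSt, b2, b3]
  by_cases z2 : z = i + n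
  · subst z2; simp [right_mem_swapSt, b1, b4]
  rw [mem_swapSt_of_ne n _ z1 z2, mem_beads, mem_beads, h, h]
  split_ifs <;> omega

theorem exists_add {n : ℕ} (hn : 1 ≤ n) {i : ℤ} {ν : YoungDiagram} (h1 : i ∈ beads ν)
    (h2 : i + n ∉ beads ν) : ∃ μ, BeadStep n i ν μ := by
  obtain ⟨Z, hZ1, hZ2⟩ := diagN_bound ν
  rw [mem_beads] at h1
  rw [not_mem_beads] at h2
  refine exists_diagN (fun k => diagN ν k + if i ≤ k ∧ k < i + n then 1 else 0) ?_
    (Z + i.natAbs + n) ?_ ?_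
  · intro k
    have := diagN_step ν k
    by_cases k1 : k = i
    · subst k1
      rw [if_pos (by omega), if_neg (by omega)]
      omega
    by_cases k2 : k = i + n
    · subst k2
      rw [if_neg (by omega), if_pos (by omega)]
      omega
    · split_ifs <;> omega
  · intro k hk
    rw [hZ1 k (by omega), if_neg (by omega)]
  · intro k hk
    rw [if_neg (by omega), add_zero, hZ2 k (by omega)]

theorem exists_remove {n : ℕ} (hn : 1 ≤ n) {i : ℤ} {μ : YoungDiagram} (h1 : i + n ∈ beads μ)
    (h2 : i ∉ beads μ) : ∃ ν, BeadStep n i ν μ := by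
  obtain ⟨Z, hZ1, hZ2⟩ := diagN_bound μ
  rw [mem_beads] at h1
  rw [not_mem_beads] at h2
  have pos : ∀ m : ℕ, m < n → 1 ≤ diagN μ (i + n - 1 - m) := by
    intro m
    induction m with
    | zero => intro _; simp; omega
    | succ m ih =>
      intro hm
      have := diagN_step μ (i + n - 1 - m)
      rw [show i + n - 1 - (m + 1 : ℕ) = i + n - 1 - m - 1 by push_cast; ring]
      have := ih (by omega)
      omega
  have pos' : ∀ k, i ≤ k ∧ k < i + n → 1 ≤ diagN μ k := by
    intro k hk
    have := pos (i + n - 1 - k).toNat (by omega)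
    rwa [show i + n - 1 - ((i + n - 1 - k).toNat : ℤ) = k by omega] at this
  obtain ⟨ν, hν⟩ := exists_diagN (fun k => diagN μ k - if i ≤ k ∧ k < i + n then 1 else 0) (by
      intro k
      have := diagN_step μ k
      by_cases k1 : k = i
      · subst k1
        have := pos' k (by omega)
        rw [if_pos (by omega), if_neg (by omega)]
        omega
      by_cases k2 : k = i + n
      · subst k2
        have := pos' (i + n - 1) (by omega)
        rw [if_neg (by omega), if_pos (by omega)]
        omega
      · split_ifs with a b b
        · have := pos' k a
          have := pos' _ b
          omega
        · omega
        · omega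
        · omega) (Z + i.natAbs + n)
    (by
      intro k hk
      rw [hZ1 k (by omega), if_neg (by omega)])
    (by
      intro k hk
      rw [if_neg (by omega), Nat.sub_zero, hZ2 k (by omega)])
  refine ⟨ν, fun k => ?_⟩
  rw [hν]
  split_ifs with h
  · have := pos' k h
    omega
  · omega

/-! ### Ribbons as lattice paths -/

/-- The content of a cell. -/
def cont (c : Cell) : ℤ := (c.2 : ℤ) - c.1

/-- `R` consists of exactly one cell on each diagonal `k ∈ [i, i + n)`, in row `b k`, consecutive
cells being neighbours. -/
def RibAt (n : ℕ) (i : ℤ) (b : ℤ → ℤ) (R : Finset Cell) : Prop :=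
  (∀ c : Cell, c ∈ R ↔ i ≤ cont c ∧ cont c < i + n ∧ (c.1 : ℤ) = b (cont c)) ∧
  (∀ k, i ≤ k → k < i + n → 0 ≤ b k ∧ 0 ≤ b k + k) ∧
  (∀ k, i ≤ k → k + 1 < i + n → b (k + 1) = b k ∨ b (k + 1) + 1 = b k)

theorem RibAt.exists_cell {n : ℕ} {i : ℤ} {b : ℤ → ℤ} {R : Finset Cell} (h : RibAt n i b R)
    {k : ℤ} (h1 : i ≤ k) (h2 : k < i + n) : ∃ c ∈ R, cont c = k ∧ (c.1 : ℤ) = b k := by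
  obtain ⟨h3, h4⟩ := h.2.1 k h1 h2
  have e : cont ((b k).toNat, (b k + k).toNat) = k := by simp only [cont]; omega
  refine ⟨((b k).toNat, (b k + k).toNat), (h.1 _).2 ⟨?_, ?_, ?_⟩, e, ?_⟩
  · omega
  · omega
  · rw [e]; dsimp only; omega
  · dsimp only; omega

theorem RibAt.start_unique {n : ℕ} (hn : 1 ≤ n) {i j : ℤ} {b b' : ℤ → ℤ} {R : Finset Cell}
    (h : RibAt n i b R) (h' : RibAt n j b' R) : i = j := by
  obtain ⟨c, hc, hc1, -⟩ := h.exists_cell le_rfl (by omega)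
  obtain ⟨d, hd, hd1, -⟩ := h'.exists_cell le_rfl (by omega)
  have h1 := ((h'.1 c).1 hc).1
  have h2 := ((h.1 d).1 hd).1
  omega

theorem RibAt.mono {n : ℕ} {i : ℤ} {b : ℤ → ℤ} {R : Finset Cell} (h : RibAt n i b R) {k : ℤ}
    (hk : i ≤ k) (m : ℕ) (hm : k + m < i + n) : b (k + m) ≤ b k ∧ b k ≤ b (k + m) + m := by
  induction m with
  | zero => simp
  | succ m ih =>
    have h1 := ih (by push_cast at hm; omega)
    have h2 := h.2.2 (k + m) (by omega) (by push_cast at hm; omega)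
    rw [show k + ((m + 1 : ℕ) : ℤ) = k + m + 1 by push_cast; ring]
    push_cast
    omega

theorem RibAt.topRight {n : ℕ} (hn : 1 ≤ n) {i : ℤ} {b : ℤ → ℤ} {R : Finset Cell}
    (h : RibAt n i b R) (c : Cell) : TopRightCell R c ↔ c ∈ R ∧ cont c = i + n - 1 := by
  have key : ∀ c ∈ R, cont c = i + n - 1 → ∀ d ∈ R, d.2 ≤ c.2 ∧ c.1 ≤ d.1 := by
    intro c hc hc1 d hd
    obtain ⟨d1, d2, d3⟩ := (h.1 d).1 hd
    obtain ⟨-, -, c3⟩ := (h.1 c).1 hc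
    have := h.mono d1 (i + n - 1 - cont d).toNat (by omega)
    rw [show cont d + ((i + n - 1 - cont d).toNat : ℤ) = cont c by omega, ← c3, ← d3] at this
    have e1 : ((i + n - 1 - cont d).toNat : ℤ) = cont c - cont d := by omega
    rw [e1] at this
    simp only [cont] at this
    omega
  constructor
  · rintro ⟨hc, hc'⟩
    refine ⟨hc, ?_⟩
    obtain ⟨d, hd, hd1, -⟩ := h.exists_cell (k := i + n - 1) (by omega) (by omega)
    have h1 := key d hd hd1 c hc
    have h2 := hc' d hd
    have h3 := h2.2 (by omega)
    simp only [cont] at *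
    omega
  · rintro ⟨hc, hc1⟩
    exact ⟨hc, fun d hd => ⟨(key c hc hc1 d hd).1, fun _ => (key c hc hc1 d hd).2⟩⟩

theorem RibAt.spin {n : ℕ} (hn : 1 ≤ n) {i : ℤ} {b : ℤ → ℤ} {R : Finset Cell}
    (h : RibAt n i b R) : (ribbonSpin R : ℤ) = b i - b (i + n - 1) := by
  have hval : ∀ m : ℕ, (m : ℤ) < n → ∀ r, b (i + m) ≤ r → r ≤ b i →
      ∃ k, i ≤ k ∧ k ≤ i + m ∧ b k = r := by
    intro m
    induction m with
    | zero => intro _ r h1 h2; exact ⟨i, le_rfl, by simp, by simp at h1; omega⟩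
    | succ m ih =>
      intro hm r h1 h2
      have h3 := h.2.2 (i + m) (by omega) (by push_cast at hm; omega)
      rw [show i + ((m + 1 : ℕ) : ℤ) = i + m + 1 by push_cast; ring] at *
      by_cases hr : b (i + m) ≤ r
      · obtain ⟨k, k1, k2, k3⟩ := ih (by push_cast at hm; omega) r hr h2
        exact ⟨k, k1, by omega, k3⟩
      · exact ⟨i + m + 1, by omega, le_rfl, by omega⟩
  have himg : (R.image Prod.fst).image (Nat.cast : ℕ → ℤ) = Finset.Icc (b (i + n - 1)) (b i) := by
    ext r
    simp only [Finset.mem_image, exists_exists_and_eq_and, Finset.mem_Icc]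
    constructor
    · rintro ⟨c, hc, rfl⟩
      obtain ⟨h1, h2, h3⟩ := (h.1 c).1 hc
      have m1 := h.mono le_rfl (cont c - i).toNat (by omega)
      have m2 := h.mono h1 (i + n - 1 - cont c).toNat (by omega)
      rw [show i + ((cont c - i).toNat : ℤ) = cont c by omega] at m1
      rw [show cont c + ((i + n - 1 - cont c).toNat : ℤ) = i + n - 1 by omega] at m2
      omega
    · rintro ⟨h1, h2⟩
      obtain ⟨k, k1, k2, k3⟩ := hval (n - 1) (by omega) r
        (by rwa [show i + ((n - 1 : ℕ) : ℤ) = i + n - 1 by omega]) h2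
      obtain ⟨c, hc, -, hc2⟩ := h.exists_cell k1 (by omega)
      exact ⟨c, hc, by omega⟩
  have hcard : ((R.image Prod.fst).card : ℤ) = b i - b (i + n - 1) + 1 := by
    rw [← Finset.card_image_of_injective (R.image Prod.fst) (Nat.cast_injective (R := ℤ)), himg,
      Int.card_Icc]
    have := (h.mono le_rfl (n - 1) (by omega)).1
    rw [show i + ((n - 1 : ℕ) : ℤ) = i + n - 1 by omega] at this
    omega
  have := (h.mono le_rfl (n - 1) (by omega)).1
  rw [show i + ((n - 1 : ℕ) : ℤ) = i + n - 1 by omega] at this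
  unfold ribbonSpin
  omega

theorem mem_skew {μ ν : YoungDiagram} (c : Cell) :
    c ∈ μ.cells \ ν.cells ↔ diagN ν (cont c) ≤ c.1 ∧ c.1 < diagN μ (cont c) := by
  rw [Finset.mem_sdiff, mem_iff_diagN, mem_iff_diagN, and_comm, not_lt]
  rfl

/-- Skew shapes are convex. -/
theorem skew_convex {S : Finset Cell} (hS : IsSkewCells S) {c d e : Cell} (hc : c ∈ S)
    (he : e ∈ S) (h1 : c ≤ d) (h2 : d ≤ e) : d ∈ S := by
  obtain ⟨l, m, -, rfl⟩ := hS
  rw [Finset.mem_sdiff] at *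
  exact ⟨l.isLowerSet h2 he.1, fun h => hc.2 (m.isLowerSet h1 h)⟩

theorem RibAt.diagN {n : ℕ} {i : ℤ} {b : ℤ → ℤ} {ν μ : YoungDiagram} (hle : ν ≤ μ)
    (h : RibAt n i b (μ.cells \ ν.cells)) :
    BeadStep n i ν μ ∧ ∀ k, i ≤ k → k < i + n → b k = RibbonCauchy.diagN ν k := by
  have mono : ∀ k, RibbonCauchy.diagN ν k ≤ RibbonCauchy.diagN μ k := by
    intro k
    by_contra hk
    push Not at hk
    rw [lt_diagN] at hk
    have h1 := (lt_diagN μ k (RibbonCauchy.diagN μ k)).not.1 (lt_irrefl _)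
    have h2 : ν.rowLen (RibbonCauchy.diagN μ k) ≤ μ.rowLen (RibbonCauchy.diagN μ k) := by
      by_contra h3
      push Not at h3
      rw [← YoungDiagram.mem_iff_lt_rowLen] at h3
      have := hle h3
      rw [YoungDiagram.mem_iff_lt_rowLen] at this
      exact lt_irrefl _ this
    omega
  have key : ∀ k r, RibbonCauchy.diagN ν k ≤ r → r < RibbonCauchy.diagN μ k →
      i ≤ k ∧ k < i + n ∧ (r : ℤ) = b k := by
    intro k r h1 h2
    have h3 := neg_le_diagN ν k
    have e : cont (r, ((r : ℤ) + k).toNat) = k := by simp only [cont]; omega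
    have := (h.1 (r, ((r : ℤ) + k).toNat)).1 (by rw [mem_skew, e]; exact ⟨h1, h2⟩)
    rwa [e] at this
  have key2 : ∀ k, i ≤ k → k < i + n → b k = RibbonCauchy.diagN ν k ∧
      RibbonCauchy.diagN μ k = RibbonCauchy.diagN ν k + 1 := by
    intro k h1 h2
    obtain ⟨c, hc, hc1, hc2⟩ := h.exists_cell h1 h2
    rw [mem_skew, hc1] at hc
    have h3 := key k (RibbonCauchy.diagN ν k) le_rfl (by omega)
    have h4 := key k (RibbonCauchy.diagN μ k - 1) (by omega) (by omega)
    omega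
  refine ⟨fun k => ?_, fun k h1 h2 => (key2 k h1 h2).1⟩
  split_ifs with hk
  · exact (key2 k hk.1 hk.2).2
  · by_contra hne
    have := mono k
    have := key k (RibbonCauchy.diagN ν k) le_rfl (by omega)
    exact hk ⟨this.1, this.2.1⟩

theorem BeadStep.le {n : ℕ} {i : ℤ} {ν μ : YoungDiagram} (h : BeadStep n i ν μ) : ν ≤ μ := by
  intro c hc
  rw [← YoungDiagram.mem_cells] at *
  rw [mem_iff_diagN] at *
  rw [h]
  omega

theorem BeadStep.ribAt {n : ℕ} {i : ℤ} {ν μ : YoungDiagram} (h : BeadStep n i ν μ) (hn : 1 ≤ n) :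
    RibAt n i (fun k => RibbonCauchy.diagN ν k) (μ.cells \ ν.cells) := by
  refine ⟨fun c => ?_, fun k _ _ => ⟨by positivity, ?_⟩, fun k h1 h2 => ?_⟩
  · rw [mem_skew, h]
    beta_reduce
    split_ifs <;> omega
  · have := neg_le_diagN ν k
    beta_reduce
    omega
  · have := diagN_step ν (k + 1)
    rw [add_sub_cancel_right] at this
    beta_reduce
    omega

theorem reach_symm {S : Finset Cell} {a b : Cell} (ha : a ∈ S) (h : Reach S a b) :
    Reach S b a := by
  have hadj : ∀ {x y : Cell}, Adj x y → Adj y x := by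
    intro x y hxy
    unfold Adj at *
    omega
  suffices h' : b ∈ S ∧ Reach S b a from h'.2
  unfold Reach at h
  induction h with
  | refl => exact ⟨ha, Relation.ReflTransGen.refl⟩
  | tail _ h2 ih => exact ⟨h2.1, Relation.ReflTransGen.head ⟨ih.1, hadj h2.2⟩ ih.2⟩

theorem RibAt.connected {n : ℕ} {i : ℤ} {b : ℤ → ℤ} {R : Finset Cell} (h : RibAt n i b R) :
    CellsConnected R := by
  have key : ∀ m : ℕ, ∀ c ∈ R, ∀ d ∈ R, cont d = cont c + m → Reach R c d := by
    intro m
    induction m with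
    | zero =>
      intro c hc d hd e
      obtain ⟨-, -, c3⟩ := (h.1 c).1 hc
      obtain ⟨-, -, d3⟩ := (h.1 d).1 hd
      simp only [Nat.cast_zero, add_zero] at e
      rw [e, ← c3] at d3
      have : c = d := by
        simp only [cont] at e
        ext <;> omega
      rw [this]
      exact Relation.ReflTransGen.refl
    | succ m ih =>
      intro c hc d hd e
      obtain ⟨c1, c2, c3⟩ := (h.1 c).1 hc
      obtain ⟨d1, d2, d3⟩ := (h.1 d).1 hd
      push_cast at e
      obtain ⟨x, hx, x1, x2⟩ := h.exists_cell (k := cont c + m) (by omega) (by omega)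
      refine Relation.ReflTransGen.tail (ih c hc x hx x1) ⟨hd, ?_⟩
      have := h.2.2 (cont c + m) (by omega) (by omega)
      rw [show cont c + m + 1 = cont d by omega, ← d3, ← x2] at this
      unfold Adj
      simp only [cont] at *
      omega
  intro c hc d hd
  rcases le_total (cont c) (cont d) with hle | hle
  · exact key (cont d - cont c).toNat c hc d hd (by omega)
  · exact reach_symm hd (key (cont c - cont d).toNat d hd c hc (by omega))

theorem RibAt.card {n : ℕ} {i : ℤ} {b : ℤ → ℤ} {R : Finset Cell} (h : RibAt n i b R) :
    R.card = n := by
  have himg : R.image cont = Finset.Ico i (i + n) := by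
    ext k
    simp only [Finset.mem_image, Finset.mem_Ico]
    constructor
    · rintro ⟨c, hc, rfl⟩
      exact ⟨((h.1 c).1 hc).1, ((h.1 c).1 hc).2.1⟩
    · rintro ⟨h1, h2⟩
      obtain ⟨c, hc, hc1, -⟩ := h.exists_cell h1 h2
      exact ⟨c, hc, hc1⟩
  have hinj : Set.InjOn cont (R : Set Cell) := by
    intro c hc d hd e
    obtain ⟨-, -, c3⟩ := (h.1 c).1 hc
    obtain ⟨-, -, d3⟩ := (h.1 d).1 hd
    rw [← e, ← c3] at d3
    simp only [cont] at e
    ext <;> omega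
  rw [← Finset.card_image_of_injOn hinj, himg]
  simp

theorem BeadStep.isRibbon {n : ℕ} {i : ℤ} {ν μ : YoungDiagram} (h : BeadStep n i ν μ)
    (hn : 1 ≤ n) : IsRibbon n (μ.cells \ ν.cells) := by
  have hr := h.ribAt hn
  refine ⟨hr.card, hr.connected, ?_, μ, ν, h.le, rfl⟩
  rintro ⟨r, s, h1, -, -, h2⟩
  obtain ⟨-, -, h3⟩ := (hr.1 _).1 h1
  obtain ⟨-, -, h4⟩ := (hr.1 _).1 h2
  have e : cont (r + 1, s + 1) = cont (r, s) := by simp only [cont]; push_cast; ring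
  rw [e, ← h3] at h4
  push_cast at h4
  omega

/-- The spin of a ribbon is the number of beads jumped over. -/
theorem BeadStep.spin {n : ℕ} {i : ℤ} {ν μ : YoungDiagram} (h : BeadStep n i ν μ) (hn : 1 ≤ n) :
    ribbonSpin (μ.cells \ ν.cells) = cnt (beads ν) (i + 1) (i + n) := by
  have h1 := (h.ribAt hn).spin hn
  have h2 : ∀ m : ℕ, (RibbonCauchy.diagN ν i : ℤ) - RibbonCauchy.diagN ν (i + m) =
      cnt (beads ν) (i + 1) (i + m + 1) := by
    intro m
    induction m with
    | zero => simp [cnt]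
    | succ m ih =>
      rw [show i + ((m + 1 : ℕ) : ℤ) = i + m + 1 by push_cast; ring,
        cnt_right _ (by omega)]
      have h3 := mem_beads ν (i + m + 1)
      have h4 := not_mem_beads ν (i + m + 1)
      rw [add_sub_cancel_right] at h3 h4
      push_cast
      rw [← ih]
      split_ifs with hb
      · have := h3.1 hb; omega
      · have := h4.1 hb; omega
  have h3 := h2 (n - 1)
  rw [show i + ((n - 1 : ℕ) : ℤ) = i + n - 1 by omega, sub_add_cancel] at h3
  omega

/-- Every `n`-ribbon in the sense of connected skew shapes without a square is a lattice path. -/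
theorem exists_ribAt {n : ℕ} (hn : 1 ≤ n) {R : Finset Cell} (h : IsRibbon n R) :
    ∃ i b, RibAt n i b R := by
  obtain ⟨hcard, hconn, hsq, hskew⟩ := h
  -- Two cells on one diagonal would span, by convexity, a `2 × 2` square.
  have hinj : ∀ c ∈ R, ∀ d ∈ R, cont c = cont d → c = d := by
    have main : ∀ c ∈ R, ∀ d ∈ R, cont c = cont d → ¬ c.1 < d.1 := by
      intro c hc d hd e hlt
      simp only [cont] at e
      refine hsq ⟨c.1, c.2, hc, ?_, ?_, ?_⟩
      all_goals
        refine skew_convex hskew hc hd ⟨?_, ?_⟩ ⟨?_, ?_⟩ <;> dsimp only <;> omega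
    intro c hc d hd e
    have h1 := main c hc d hd e
    have h2 := main d hd c hc e.symm
    simp only [cont] at e
    ext <;> omega
  -- A path in `R` from content at most `k` to content above `k` crosses between the diagonals
  -- `k` and `k + 1`.
  have hcross : ∀ (k : ℤ) (a b : Cell), a ∈ R → Reach R a b → cont a ≤ k → k < cont b →
      ∃ c ∈ R, ∃ d ∈ R, cont c = k ∧ cont d = k + 1 ∧ Adj c d := by
    intro k a b ha hab hak hkb
    unfold Reach at hab
    have : cont b ≤ k ∨ ∃ c ∈ R, ∃ d ∈ R, cont c = k ∧ cont d = k + 1 ∧ Adj c d := by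
      suffices b ∈ R ∧ (cont b ≤ k ∨
          ∃ c ∈ R, ∃ d ∈ R, cont c = k ∧ cont d = k + 1 ∧ Adj c d) from this.2
      clear hkb
      induction hab with
      | refl => exact ⟨ha, Or.inl hak⟩
      | @tail x y hx hxy ih =>
        refine ⟨hxy.1, ?_⟩
        rcases ih.2 with h1 | h1
        · by_cases hy : cont y ≤ k
          · exact Or.inl hy
          · refine Or.inr ⟨x, ih.1, y, hxy.1, ?_, ?_, hxy.2⟩
            all_goals
              have := hxy.2
              unfold Adj at this
              simp only [cont] at *
              omega
        · exact Or.inr h1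
    rcases this with h1 | h1
    · omega
    · exact h1
  have hne : R.Nonempty := by rw [← Finset.card_pos]; omega
  obtain ⟨c0, hc0, hmin⟩ := Finset.exists_min_image R cont hne
  obtain ⟨c1, hc1, hmax⟩ := Finset.exists_max_image R cont hne
  have hall : ∀ k, cont c0 ≤ k → k ≤ cont c1 → ∃ c ∈ R, cont c = k := by
    intro k h1 h2
    rcases h2.eq_or_lt with h3 | h3
    · exact ⟨c1, hc1, h3.symm⟩
    · obtain ⟨c, hc, -, -, h4, -⟩ := hcross k c0 c1 hc0 (hconn _ hc0 _ hc1) h1 h3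
      exact ⟨c, hc, h4⟩
  have himg : R.image cont = Finset.Icc (cont c0) (cont c1) := by
    ext k
    simp only [Finset.mem_image, Finset.mem_Icc]
    constructor
    · rintro ⟨c, hc, rfl⟩
      exact ⟨hmin c hc, hmax c hc⟩
    · rintro ⟨h1, h2⟩
      exact hall k h1 h2
  have hlen : cont c1 + 1 = cont c0 + n := by
    have h1 := Finset.card_image_of_injOn (s := R) (f := cont) (fun c hc d hd e => hinj c hc d hd e)
    rw [himg, hcard, Int.card_Icc] at h1
    omega
  choose! g hg1 hg2 using hall
  refine ⟨cont c0, fun k => (g k).1, fun c => ?_, fun k h1 h2 => ?_, fun k h1 h2 => ?_⟩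
  · constructor
    · intro hc
      have h1 := hmin c hc
      have h2 := hmax c hc
      refine ⟨h1, by omega, ?_⟩
      beta_reduce
      rw [hinj _ (hg1 _ h1 h2) c hc (hg2 _ h1 h2)]
    · rintro ⟨h1, h2, h3⟩
      have h4 := hg1 (cont c) h1 (by omega)
      have h5 := hg2 (cont c) h1 (by omega)
      have : g (cont c) = c := by
        dsimp only at h3
        generalize g (cont c) = d at *
        simp only [cont] at h5
        ext <;> omega
      rwa [this] at h4
  · refine ⟨by positivity, ?_⟩
    have h5 := hg2 k h1 (by omega)
    simp only [cont] at h5 ⊢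
    omega
  · dsimp only
    obtain ⟨c, hc, d, hd, h3, h4, h5⟩ := hcross k c0 c1 hc0 (hconn _ hc0 _ hc1) h1 (by omega)
    have e1 := hinj _ (hg1 k h1 (by omega)) c hc ((hg2 k h1 (by omega)).trans h3.symm)
    have e2 := hinj _ (hg1 (k + 1) (by omega) (by omega)) d hd
      ((hg2 (k + 1) (by omega) (by omega)).trans h4.symm)
    rw [e1, e2]
    unfold Adj at h5
    simp only [cont] at *
    omega

end Beads

end RibbonCauchy

namespace RibbonCauchy

/-! ### Horizontal strips and the operators `1 + x u_i` -/

/-- In a horizontal strip no cell lies strictly above and weakly left of the head of a ribbon. -/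
theorem head_above {n : ℕ} (hn : 1 ≤ n) {S : Finset Cell} {T : Finset (Finset Cell)}
    (hS : IsSkewCells S) (hT : IsHStripTiling n S T) {R : Finset Cell} (hR : R ∈ T) {i : ℤ}
    {b : ℤ → ℤ} (hb : RibAt n i b R) {d e : Cell} (hd : d ∈ R) (hd1 : cont d = i + n - 1)
    (he : e ∈ S) (h1 : e.1 < d.1) (h2 : e.2 ≤ d.2) : False := by
  have hdS : d ∈ S := by
    rw [← hT.1.2.2]
    exact Finset.mem_biUnion.2 ⟨R, hR, hd⟩
  rcases hT.2 R hR d ((hb.topRight hn d).2 ⟨hd, hd1⟩) with h | h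
  · omega
  · exact h (skew_convex hS he hdS (Prod.mk_le_mk.2 ⟨by omega, h2⟩)
      (Prod.mk_le_mk.2 ⟨by omega, le_rfl⟩))

/-- The ribbons of a horizontal strip start on distinct diagonals. -/
theorem start_inj {n : ℕ} (hn : 1 ≤ n) {S : Finset Cell} {T : Finset (Finset Cell)}
    (hS : IsSkewCells S) (hT : IsHStripTiling n S T) {R R' : Finset Cell} (hR : R ∈ T)
    (hR' : R' ∈ T) {i : ℤ} {b b' : ℤ → ℤ} (hb : RibAt n i b R) (hb' : RibAt n i b' R') :
    R = R' := by
  by_contra hne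
  obtain ⟨c, hc, hc1, hc2⟩ := hb.exists_cell (k := i + n - 1) (by omega) (by omega)
  obtain ⟨d, hd, hd1, hd2⟩ := hb'.exists_cell (k := i + n - 1) (by omega) (by omega)
  have hsub : ∀ A ∈ T, ∀ x ∈ A, x ∈ S := by
    intro A hA x hx
    rw [← hT.1.2.2]
    exact Finset.mem_biUnion.2 ⟨A, hA, hx⟩
  have hcd : c ≠ d := by
    rintro rfl
    exact Finset.disjoint_left.1 (hT.1.2.1 hR hR' hne) hc hd
  have e1 := hc1
  have e2 := hd1
  simp only [cont] at e1 e2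
  rcases lt_trichotomy c.1 d.1 with h | h | h
  · exact head_above hn hS hT hR' hb' hd hd1 (hsub R hR c hc) h (by omega)
  · exact hcd (Prod.ext h (by omega))
  · exact head_above hn hS hT hR hb hc hc1 (hsub R' hR' d hd) h (by omega)

/-- In a horizontal strip a ribbon `R'` starting to the left of `R` never passes below `R`. -/
theorem no_cross {n : ℕ} (hn : 1 ≤ n) {S : Finset Cell} {T : Finset (Finset Cell)}
    (hS : IsSkewCells S) (hT : IsHStripTiling n S T) {R R' : Finset Cell} (hR : R ∈ T)
    (hR' : R' ∈ T) {i i' : ℤ} {b b' : ℤ → ℤ} (hb : RibAt n i b R) (hb' : RibAt n i' b' R')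
    (hi : i' < i) {k : ℤ} (hk : i ≤ k) (hk' : k < i' + n) (hlt : b k < b' k) : False := by
  have hne : R ≠ R' := by
    rintro rfl
    have := hb.start_unique hn hb'
    omega
  have hdisj := hT.1.2.1 hR hR' hne
  -- Being disjoint, the two paths keep their order up to the head of `R'`, where the next cell of
  -- `R` contradicts `head_above`.
  have prop : ∀ m : ℕ, k + m < i' + n → b (k + m) < b' (k + m) := by
    intro m
    induction m with
    | zero => intro _; simpa using hlt
    | succ m ih =>
      intro hm
      push_cast at hm
      have h1 := ih (by omega)
      have h2 := hb.2.2 (k + m) (by omega) (by omega)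
      have h3 := hb'.2.2 (k + m) (by omega) (by omega)
      rw [show k + ((m + 1 : ℕ) : ℤ) = k + m + 1 by push_cast; ring]
      have h4 : b (k + m + 1) ≠ b' (k + m + 1) := by
        intro h5
        obtain ⟨c, hc, hc1, hc2⟩ := hb.exists_cell (k := k + m + 1) (by omega) (by omega)
        exact Finset.disjoint_left.1 hdisj hc
          ((hb'.1 c).2 ⟨by omega, by omega, by rw [hc1, hc2, h5]⟩)
      omega
  have h1 := prop (i' + n - 1 - k).toNat (by omega)
  rw [show k + ((i' + n - 1 - k).toNat : ℤ) = i' + n - 1 by omega] at h1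
  have h2 := hb.2.2 (i' + n - 1) (by omega) (by omega)
  obtain ⟨d, hd, hd1, hd2⟩ := hb'.exists_cell (k := i' + n - 1) (by omega) (by omega)
  obtain ⟨e, he, he1, he2⟩ := hb.exists_cell (k := i' + n - 1 + 1) (by omega) (by omega)
  have heS : e ∈ S := by
    rw [← hT.1.2.2]
    exact Finset.mem_biUnion.2 ⟨R, hR, he⟩
  have e1 := he1
  have e2 := hd1
  simp only [cont] at e1 e2
  exact head_above hn hS hT hR' hb' hd hd1 heS (by omega) (by omega)

/-- Removing from a horizontal strip the ribbon with the rightmost starting diagonal leaves a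
horizontal strip. -/
theorem strip_remove {n : ℕ} (hn : 1 ≤ n) {ν' μ : YoungDiagram} (hle : ν' ≤ μ)
    {T : Finset (Finset Cell)} (hT : IsHStripTiling n (μ.cells \ ν'.cells) T) {R : Finset Cell}
    (hR : R ∈ T) {i : ℤ} {b : ℤ → ℤ} (hb : RibAt n i b R)
    (hmax : ∀ R' ∈ T, ∃ i' b', i' ≤ i ∧ RibAt n i' b' R') :
    ∃ ν, BeadStep n i ν μ ∧ μ.cells \ ν.cells = R ∧ ν' ≤ ν ∧
      IsHStripTiling n (ν.cells \ ν'.cells) (T.erase R) := by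
  have hS : IsSkewCells (μ.cells \ ν'.cells) := ⟨μ, ν', hle, rfl⟩
  have hmem : ∀ x, x ∈ μ.cells \ ν'.cells ↔ ∃ A ∈ T, x ∈ A := by
    intro x
    rw [← hT.1.2.2, Finset.mem_biUnion]
    rfl
  have hRS : ∀ x ∈ R, x ∈ μ.cells \ ν'.cells := fun x hx => (hmem x).2 ⟨R, hR, hx⟩
  -- a cell of the strip outside `R` lies in a ribbon starting strictly further left
  have hother : ∀ x, x ∈ μ.cells \ ν'.cells → x ∉ R → ∃ R' ∈ T, x ∈ R' ∧ Disjoint R R' ∧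
      ∃ i' b', i' < i ∧ RibAt n i' b' R' := by
    intro x hx hxR
    obtain ⟨R', hR', hxR'⟩ := (hmem x).1 hx
    have hne : R ≠ R' := by rintro rfl; exact hxR hxR'
    obtain ⟨i', b', hi', hb'⟩ := hmax R' hR'
    refine ⟨R', hR', hxR', hT.1.2.1 hR hR' hne, i', b', lt_of_le_of_ne hi' ?_, hb'⟩
    rintro rfl
    exact hne (start_inj hn hS hT hR hR' hb hb')
  have hup : ∀ c d : Cell, c ∈ R → c ≤ d → d ∈ μ.cells → d ∈ μ.cells \ ν'.cells := by
    intro c d hc hcd hd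
    have := hRS c hc
    rw [Finset.mem_sdiff] at *
    exact ⟨hd, fun h => this.2 (ν'.isLowerSet hcd h)⟩
  -- A cell of the strip just right of or below `R` would belong to a ribbon passing below `R`.
  have hlow : IsLowerSet ((μ.cells \ R : Finset Cell) : Set Cell) := by
    apply isLowerSet_of_step
    · intro r s h
      rw [Finset.mem_coe, Finset.mem_sdiff] at *
      have hμ : (r, s) ∈ μ.cells :=
        μ.isLowerSet (show ((r, s) : Cell) ≤ (r, s + 1) from ⟨le_rfl, Nat.le_succ _⟩) h.1
      refine ⟨hμ, fun hc => ?_⟩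
      obtain ⟨R', hR', hxR', hdisj, i', b', hi', hb'⟩ := hother (r, s + 1)
        (hup (r, s) _ hc ⟨le_rfl, Nat.le_succ _⟩ h.1) h.2
      obtain ⟨c1, c2, c3⟩ := (hb.1 _).1 hc
      obtain ⟨d1, d2, d3⟩ := (hb'.1 _).1 hxR'
      have e : cont (r, s + 1) = cont (r, s) + 1 := by simp only [cont]; push_cast; ring
      rw [e] at d1 d2 d3
      have h3 := hb.2.2 (cont (r, s)) c1 (by omega)
      have h4 : b (cont (r, s) + 1) ≠ r := by
        intro h5
        exact h.2 ((hb.1 _).2 ⟨by omega, by omega, by rw [e, h5]⟩)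
      exact no_cross hn hS hT hR hR' hb hb' hi' (k := cont (r, s) + 1) (by omega) (by omega)
        (by simp only at c3 d3; omega)
    · intro r s h
      rw [Finset.mem_coe, Finset.mem_sdiff] at *
      have hμ : (r, s) ∈ μ.cells :=
        μ.isLowerSet (show ((r, s) : Cell) ≤ (r + 1, s) from ⟨Nat.le_succ _, le_rfl⟩) h.1
      refine ⟨hμ, fun hc => ?_⟩
      obtain ⟨R', hR', hxR', hdisj, i', b', hi', hb'⟩ := hother (r + 1, s)
        (hup (r, s) _ hc ⟨Nat.le_succ _, le_rfl⟩ h.1) h.2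
      obtain ⟨c1, c2, c3⟩ := (hb.1 _).1 hc
      obtain ⟨d1, d2, d3⟩ := (hb'.1 _).1 hxR'
      have e : cont (r + 1, s) = cont (r, s) - 1 := by simp only [cont]; push_cast; ring
      rw [e] at d1 d2 d3
      simp only at c3 d3
      push_cast at d3
      by_cases hk : i ≤ cont (r, s) - 1
      · have h3 := hb.2.2 (cont (r, s) - 1) hk (by omega)
        rw [sub_add_cancel] at h3
        have h4 : b (cont (r, s) - 1) ≠ r + 1 := by
          intro h5
          exact h.2 ((hb.1 _).2 ⟨by omega, by omega, by rw [e, h5]; push_cast; rfl⟩)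
        exact no_cross hn hS hT hR hR' hb hb' hi' (k := cont (r, s) - 1) (by omega) (by omega)
          (by omega)
      · by_cases hk2 : cont (r, s) < i' + n
        · have h3 := hb'.2.2 (cont (r, s) - 1) d1 (by omega)
          rw [sub_add_cancel] at h3
          have h4 : b' (cont (r, s)) ≠ r := by
            intro h5
            exact Finset.disjoint_left.1 hdisj hc ((hb'.1 _).2 ⟨by omega, by omega, by rw [h5]⟩)
          exact no_cross hn hS hT hR hR' hb hb' hi' (k := cont (r, s)) (by omega) (by omega)
            (by omega)
        · exact head_above hn hS hT hR' hb' hxR' (by omega) (hRS _ hc) (by simp) le_rfl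
  have hRμ : R ⊆ μ.cells := fun x hx => (Finset.mem_sdiff.1 (hRS x hx)).1
  have hdiff : μ.cells \ (⟨μ.cells \ R, hlow⟩ : YoungDiagram).cells = R :=
    Finset.sdiff_sdiff_eq_self hRμ
  have hνμ : (⟨μ.cells \ R, hlow⟩ : YoungDiagram) ≤ μ := by
    intro x hx
    exact (Finset.mem_sdiff.1 hx).1
  refine ⟨⟨μ.cells \ R, hlow⟩, (RibAt.diagN hνμ (by rw [hdiff]; exact hb)).1, hdiff, ?_, ?_⟩
  · intro x hx
    exact Finset.mem_sdiff.2 ⟨hle hx, fun h => (Finset.mem_sdiff.1 (hRS x h)).2 hx⟩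
  · refine ⟨⟨fun A hA => hT.1.1 A (Finset.mem_of_mem_erase hA), fun A hA B hB =>
      hT.1.2.1 (Finset.mem_of_mem_erase hA) (Finset.mem_of_mem_erase hB), ?_⟩, ?_⟩
    · ext x
      rw [Finset.mem_biUnion, Finset.mem_sdiff]
      dsimp only [id]
      rw [Finset.mem_sdiff]
      constructor
      · rintro ⟨A, hA, hx⟩
        rw [Finset.mem_erase] at hA
        have := (hmem x).2 ⟨A, hA.2, hx⟩
        rw [Finset.mem_sdiff] at this
        exact ⟨⟨this.1, fun h => Finset.disjoint_left.1 (hT.1.2.1 hA.2 hR hA.1) hx h⟩, this.2⟩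
      · rintro ⟨⟨h1, h2⟩, h3⟩
        obtain ⟨A, hA, hx⟩ := (hmem x).1 (Finset.mem_sdiff.2 ⟨h1, h3⟩)
        exact ⟨A, Finset.mem_erase.2 ⟨by rintro rfl; exact h2 hx, hA⟩, hx⟩
    · intro A hA c hc
      refine (hT.2 A (Finset.mem_of_mem_erase hA) c hc).imp_right fun h hx => h ?_
      rw [Finset.mem_sdiff] at *
      exact ⟨hνμ hx.1, hx.2⟩

/-- Adding to a horizontal strip a ribbon starting to the right of all its ribbons gives a
horizontal strip. -/
theorem strip_add {n : ℕ} (hn : 1 ≤ n) {ν' ν μ : YoungDiagram} (hle : ν' ≤ ν)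
    {T : Finset (Finset Cell)} (hT : IsHStripTiling n (ν.cells \ ν'.cells) T) {i : ℤ}
    (hstep : BeadStep n i ν μ) (hmax : ∀ R' ∈ T, ∃ i' b', i' < i ∧ RibAt n i' b' R') :
    IsHStripTiling n (μ.cells \ ν'.cells) (insert (μ.cells \ ν.cells) T) := by
  have hνμ := hstep.le
  have hmem : ∀ x, x ∈ ν.cells \ ν'.cells ↔ ∃ A ∈ T, x ∈ A := by
    intro x
    rw [← hT.1.2.2, Finset.mem_biUnion]
    rfl
  have hdis : ∀ A ∈ T, Disjoint (μ.cells \ ν.cells) A := by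
    intro A hA
    rw [Finset.disjoint_left]
    intro x hx hxA
    exact (Finset.mem_sdiff.1 hx).2 (Finset.mem_sdiff.1 ((hmem x).2 ⟨A, hA, hxA⟩)).1
  refine ⟨⟨?_, ?_, ?_⟩, ?_⟩
  · intro A hA
    rcases Finset.mem_insert.1 hA with rfl | hA
    · exact hstep.isRibbon hn
    · exact hT.1.1 A hA
  · intro A hA B hB hne
    rw [Finset.mem_coe, Finset.mem_insert] at hA hB
    rcases hA with rfl | hA <;> rcases hB with rfl | hB
    · exact absurd rfl hne
    · exact hdis B hB
    · exact (hdis A hA).symm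
    · exact hT.1.2.1 hA hB hne
  · rw [Finset.biUnion_insert, hT.1.2.2]
    ext x
    simp only [id, Finset.mem_union, Finset.mem_sdiff]
    have h1 : x ∈ ν'.cells → x ∈ ν.cells := fun h => hle h
    have h2 : x ∈ ν.cells → x ∈ μ.cells := fun h => hνμ h
    tauto
  · intro A hA c hc
    by_cases hc0 : c.1 = 0
    · exact Or.inl hc0
    refine Or.inr fun hx => ?_
    rcases Finset.mem_insert.1 hA with rfl | hA
    · have hrib := hstep.ribAt hn
      obtain ⟨hcR, hcc⟩ := (hrib.topRight hn c).1 hc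
      have e : cont (c.1 - 1, c.2) = i + n := by
        simp only [cont] at *
        omega
      by_cases hxν : (c.1 - 1, c.2) ∈ ν.cells
      · obtain ⟨A, hA', hxA⟩ := (hmem _).1 (Finset.mem_sdiff.2 ⟨hxν, (Finset.mem_sdiff.1 hx).2⟩)
        obtain ⟨i', b', hi', hb'⟩ := hmax A hA'
        have := ((hb'.1 _).1 hxA).2.1
        omega
      · have := ((hrib.1 _).1 (Finset.mem_sdiff.2 ⟨(Finset.mem_sdiff.1 hx).1, hxν⟩)).2.1
        omega
    · rcases hT.2 A hA c hc with h | h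
      · exact hc0 h
      · apply h
        have hcν := (Finset.mem_sdiff.1 ((hmem c).2 ⟨A, hA, hc.1⟩)).1
        exact Finset.mem_sdiff.2 ⟨ν.isLowerSet (Prod.mk_le_mk.2 ⟨by omega, le_rfl⟩) hcν,
          (Finset.mem_sdiff.1 hx).2⟩

end RibbonCauchy

namespace RibbonCauchy

/-! ### Enumeration of horizontal strips by the window operators -/

theorem finite_le (μ : YoungDiagram) : {ν : YoungDiagram | ν ≤ μ}.Finite := by
  refine Set.Finite.of_injOn (f := YoungDiagram.cells) (t := (μ.cells.powerset : Set (Finset Cell)))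
    ?_ ?_ (Finset.finite_toSet _)
  · intro ν hν
    exact Finset.mem_coe.2 (Finset.mem_powerset.2 hν)
  · intro ν _ ν' _ h
    exact YoungDiagram.ext h

/-- The horizontal strips that can be removed from `μ`, each recorded by the remaining partition
and the tiling. -/
def Strips (n : ℕ) (μ : YoungDiagram) : Set (YoungDiagram × Finset (Finset Cell)) :=
  {p | p.1 ≤ μ ∧ IsHStripTiling n (μ.cells \ p.1.cells) p.2}

/-- The horizontal strips all of whose ribbons start on a diagonal in `[a, a + len)`. -/
def StripsIn (n : ℕ) (a : ℤ) (len : ℕ) (μ : YoungDiagram) :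
    Set (YoungDiagram × Finset (Finset Cell)) :=
  {p | p ∈ Strips n μ ∧ ∀ R ∈ p.2, ∃ i b, a ≤ i ∧ i < a + len ∧ RibAt n i b R}

theorem Strips.subset {n : ℕ} {μ : YoungDiagram} {p : YoungDiagram × Finset (Finset Cell)}
    (hp : p ∈ Strips n μ) {R : Finset Cell} (hR : R ∈ p.2) : R ⊆ μ.cells := by
  intro x hx
  have : x ∈ μ.cells \ p.1.cells := by
    rw [← hp.2.1.2.2]
    exact Finset.mem_biUnion.2 ⟨R, hR, hx⟩
  exact (Finset.mem_sdiff.1 this).1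

theorem finite_strips (n : ℕ) (μ : YoungDiagram) : (Strips n μ).Finite := by
  refine ((finite_le μ).prod (Finset.finite_toSet μ.cells.powerset.powerset)).subset ?_
  intro p hp
  refine ⟨hp.1, Finset.mem_coe.2 (Finset.mem_powerset.2 fun R hR => ?_)⟩
  exact Finset.mem_powerset.2 (Strips.subset hp hR)

theorem finite_stripsIn (n : ℕ) (a : ℤ) (len : ℕ) (μ : YoungDiagram) :
    (StripsIn n a len μ).Finite :=
  (finite_strips n μ).subset fun _ hp => hp.1

theorem stripsIn_zero (n : ℕ) (a : ℤ) (μ : YoungDiagram) : StripsIn n a 0 μ = {(μ, ∅)} := by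
  ext ⟨ν, T⟩
  rw [Set.mem_singleton_iff]
  constructor
  · rintro ⟨⟨h1, h2⟩, h3⟩
    have hT : T = ∅ := by
      rw [Finset.eq_empty_iff_forall_notMem]
      intro R hR
      obtain ⟨i, b, h4, h5, -⟩ := h3 R hR
      simp at h5
      omega
    subst hT
    have h4 := h2.1.2.2
    simp only [Finset.biUnion_empty] at h4
    have h5 : μ.cells ⊆ ν.cells := Finset.sdiff_eq_empty_iff_subset.1 h4.symm
    have h6 : ν = μ := le_antisymm h1 h5
    rw [h6]
  · intro h
    obtain ⟨rfl, rfl⟩ := Prod.mk.inj h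
    refine ⟨⟨le_rfl, ⟨?_, ?_, ?_⟩, ?_⟩, ?_⟩
    · intro R hR; simp at hR
    · simp
    · simp
    · intro R hR; simp at hR
    · intro R hR; simp at hR

theorem stripsIn_mono {n : ℕ} {a : ℤ} {len : ℕ} {μ : YoungDiagram} :
    StripsIn n a len μ ⊆ StripsIn n a (len + 1) μ := by
  rintro p ⟨h1, h2⟩
  refine ⟨h1, fun R hR => ?_⟩
  obtain ⟨i, b, h3, h4, h5⟩ := h2 R hR
  exact ⟨i, b, h3, by push_cast; omega, h5⟩

/-- The strips with ribbons starting at `a, …, a + len` but not all before `a + len` arise by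
removing a first ribbon starting at `a + len`. -/
theorem stripsIn_succ_cases {n : ℕ} (hn : 1 ≤ n) {a : ℤ} {len : ℕ} {μ : YoungDiagram}
    {p : YoungDiagram × Finset (Finset Cell)} (hp : p ∈ StripsIn n a (len + 1) μ) :
    p ∈ StripsIn n a len μ ∨ ∃ ν, BeadStep n (a + len) ν μ ∧
      ∃ p' ∈ StripsIn n a len ν, p = (p'.1, insert (μ.cells \ ν.cells) p'.2) := by
  obtain ⟨hp1, hp2⟩ := hp
  by_cases h : ∃ R ∈ p.2, ∃ b, RibAt n (a + len) b R
  · right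
    obtain ⟨R, hR, b, hb⟩ := h
    obtain ⟨ν, h1, h2, h3, h4⟩ := strip_remove hn hp1.1 hp1.2 hR hb (by
      intro R' hR'
      obtain ⟨i', b', -, h4, h5⟩ := hp2 R' hR'
      exact ⟨i', b', by push_cast at h4; omega, h5⟩)
    refine ⟨ν, h1, (p.1, p.2.erase R), ⟨⟨h3, h4⟩, fun R' hR' => ?_⟩, ?_⟩
    · obtain ⟨i', b', h5, h6, h7⟩ := hp2 R' (Finset.mem_of_mem_erase hR')
      refine ⟨i', b', h5, lt_of_le_of_ne (by push_cast at h6; omega) ?_, h7⟩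
      rintro rfl
      exact Finset.ne_of_mem_erase hR'
        (start_inj hn ⟨μ, p.1, hp1.1, rfl⟩ hp1.2 (Finset.mem_of_mem_erase hR') hR h7 hb)
    · dsimp only
      rw [h2, Finset.insert_erase hR]
  · left
    refine ⟨hp1, fun R hR => ?_⟩
    obtain ⟨i', b', h5, h6, h7⟩ := hp2 R hR
    refine ⟨i', b', h5, lt_of_le_of_ne (by push_cast at h6; omega) ?_, h7⟩
    rintro rfl
    exact h ⟨R, hR, b', h7⟩

theorem stripsIn_succ_add {n : ℕ} (hn : 1 ≤ n) {a : ℤ} {len : ℕ} {ν μ : YoungDiagram}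
    (h : BeadStep n (a + len) ν μ) {p : YoungDiagram × Finset (Finset Cell)}
    (hp : p ∈ StripsIn n a len ν) :
    (p.1, insert (μ.cells \ ν.cells) p.2) ∈ StripsIn n a (len + 1) μ ∧
      μ.cells \ ν.cells ∉ p.2 := by
  obtain ⟨hp1, hp2⟩ := hp
  refine ⟨⟨⟨hp1.1.trans h.le, strip_add hn hp1.1 hp1.2 h fun R hR => ?_⟩, fun R hR => ?_⟩, ?_⟩
  · obtain ⟨i', b', -, h4, h5⟩ := hp2 R hR
    exact ⟨i', b', h4, h5⟩
  · rcases Finset.mem_insert.1 hR with rfl | hR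
    · exact ⟨_, _, by omega, by push_cast; omega, h.ribAt hn⟩
    · obtain ⟨i', b', h3, h4, h5⟩ := hp2 R hR
      exact ⟨i', b', h3, by push_cast; omega, h5⟩
  · intro hR
    obtain ⟨i', b', h3, h4, h5⟩ := hp2 _ hR
    have := (h.ribAt hn).start_unique hn h5
    omega

variable {S : Type*} [CommRing S]

/-- The window operator enumerates horizontal ribbon strips by spin and number of ribbons. -/
theorem uWin_beads {n : ℕ} (hn : 1 ≤ n) (q x : S) (a : ℤ) (len : ℕ) (v : Set ℤ → S)
    (μ : YoungDiagram) :
    uWin n q x a len v (beads μ) =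
      ∑ᶠ p ∈ StripsIn n a len μ, q ^ tilingSpin p.2 * x ^ p.2.card * v (beads p.1) := by
  induction len generalizing μ with
  | zero =>
    rw [stripsIn_zero, finsum_mem_singleton]
    simp [uWin, tilingSpin]
  | succ len ih =>
    simp only [uWin, Module.End.mul_apply, LinearMap.add_apply, Module.End.one_apply,
      LinearMap.smul_apply, Pi.add_apply, Pi.smul_apply, smul_eq_mul]
    simp only [uOp, LinearMap.coe_mk, AddHom.coe_mk]
    by_cases h : a + len + n ∈ beads μ ∧ a + len ∉ beads μ
    · rw [if_pos h]
      obtain ⟨ν, hν⟩ := exists_remove hn h.1 h.2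
      have hb := (hν.beads_iff hn).2.2.2.2
      have hspin := hν.spin hn
      rw [← hb, cnt_swap_self, swapSt_swapSt, hb, ih, ih]
      have huniq : ∀ ν', BeadStep n (a + len) ν' μ → ν' = ν := by
        intro ν' h'
        refine diagN_injective fun k => ?_
        have h1 := h' k
        have h2 := hν k
        omega
      have hset : StripsIn n a (len + 1) μ = StripsIn n a len μ ∪
          (fun p : YoungDiagram × Finset (Finset Cell) =>
            (p.1, insert (μ.cells \ ν.cells) p.2)) '' StripsIn n a len ν := by
        ext p
        constructor
        · intro hp
          rcases stripsIn_succ_cases hn hp with hp | ⟨ν', h1, p', h2, rfl⟩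
          · exact Or.inl hp
          · obtain rfl := huniq ν' h1
            exact Or.inr ⟨p', h2, rfl⟩
        · rintro (hp | ⟨p', h2, rfl⟩)
          · exact stripsIn_mono hp
          · exact (stripsIn_succ_add hn hν h2).1
      have hdis : Disjoint (StripsIn n a len μ)
          ((fun p : YoungDiagram × Finset (Finset Cell) =>
            (p.1, insert (μ.cells \ ν.cells) p.2)) '' StripsIn n a len ν) := by
        rw [Set.disjoint_left]
        rintro _ h1 ⟨p', h2, rfl⟩
        obtain ⟨i', b', h3, h4, h5⟩ := h1.2 _ (Finset.mem_insert_self _ _)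
        have := (hν.ribAt hn).start_unique hn h5
        omega
      rw [hset, finsum_mem_union hdis (finite_stripsIn _ _ _ _)
        ((finite_stripsIn _ _ _ _).image _), finsum_mem_image]
      · congr 1
        rw [← mul_assoc, mul_finsum_mem' _ _ (finite_stripsIn _ _ _ _)]
        refine finsum_mem_congr rfl fun p hp => ?_
        have hnot := (stripsIn_succ_add hn hν hp).2
        dsimp only
        unfold tilingSpin
        rw [Finset.card_insert_of_notMem hnot, Finset.sum_insert hnot, hspin, pow_add, pow_succ]
        ring
      · intro p hp p' hp' he
        have h1 := (stripsIn_succ_add hn hν hp).2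
        have h2 := (stripsIn_succ_add hn hν hp').2
        obtain ⟨e1, e2⟩ := Prod.mk.inj he
        refine Prod.ext e1 ?_
        rw [← Finset.erase_insert h1, e2, Finset.erase_insert h2]
    · rw [if_neg h, mul_zero, add_zero, ih]
      have hset : StripsIn n a (len + 1) μ = StripsIn n a len μ := by
        ext p
        refine ⟨fun hp => ?_, fun hp => stripsIn_mono hp⟩
        rcases stripsIn_succ_cases hn hp with hp | ⟨ν', h1, -⟩
        · exact hp
        · have := h1.beads_iff hn
          exact absurd ⟨this.2.2.2.1, this.2.2.1⟩ h
      rw [hset]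

/-! ### Tableaux -/

/-- Appending the strip `p` to a tableau of shape `p.1 / δ`. -/
def snocTab {n N : ℕ} {μ δ : YoungDiagram}
    (P : Σ p : Strips n μ, RibbonTableau n N p.1.1 δ) : RibbonTableau n (N + 1) μ δ where
  chain := Fin.snoc (α := fun _ => YoungDiagram) P.2.chain μ
  chain_zero := by
    rw [← Fin.castSucc_zero, Fin.snoc_castSucc]
    exact P.2.chain_zero
  chain_last := by rw [Fin.snoc_last]
  chain_mono := by
    intro i
    induction i using Fin.lastCases with
    | last =>
      rw [Fin.succ_last, Fin.snoc_last, Fin.snoc_castSucc, P.2.chain_last]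
      exact P.1.2.1
    | cast j =>
      rw [Fin.succ_castSucc, Fin.snoc_castSucc, Fin.snoc_castSucc]
      exact P.2.chain_mono j
  tiling := Fin.snoc (α := fun _ => Finset (Finset Cell)) P.2.tiling P.1.1.2
  tiling_strip := by
    intro i
    induction i using Fin.lastCases with
    | last =>
      rw [Fin.succ_last, Fin.snoc_last, Fin.snoc_castSucc, Fin.snoc_last, P.2.chain_last]
      exact P.1.2.2
    | cast j =>
      rw [Fin.succ_castSucc, Fin.snoc_castSucc, Fin.snoc_castSucc, Fin.snoc_castSucc]
      exact P.2.tiling_strip j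

theorem tab_ext {n N : ℕ} {μ δ : YoungDiagram} {T T' : RibbonTableau n N μ δ}
    (h1 : T.chain = T'.chain) (h2 : T.tiling = T'.tiling) : T = T' := by
  cases T; cases T'; cases h1; cases h2; rfl

theorem snocTab_bijective {n N : ℕ} {μ δ : YoungDiagram} :
    Function.Bijective (snocTab : (Σ p : Strips n μ, RibbonTableau n N p.1.1 δ) → _) := by
  constructor
  · rintro ⟨⟨⟨ν, A⟩, hp⟩, T⟩ ⟨⟨⟨ν', A'⟩, hp'⟩, T'⟩ h
    have h1 := congrArg RibbonTableau.chain h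
    have h2 := congrArg RibbonTableau.tiling h
    simp only [snocTab] at h1 h2
    have h3 := (Fin.snoc_injective2 h1).1
    obtain ⟨h4, h5⟩ := Fin.snoc_injective2 h2
    have h6 : ν = ν' := by
      have := congrFun h3 (Fin.last N)
      rw [T.chain_last, T'.chain_last] at this
      exact this
    subst h6
    subst h5
    rw [tab_ext h3 h4]
  · intro T
    have hs : (T.chain (Fin.last N).castSucc, T.tiling (Fin.last N)) ∈ Strips n μ := by
      have h1 := T.chain_mono (Fin.last N)
      have h2 := T.tiling_strip (Fin.last N)
      rw [Fin.succ_last, T.chain_last] at h1 h2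
      exact ⟨h1, h2⟩
    refine ⟨⟨⟨_, hs⟩, ⟨fun i => T.chain i.castSucc, T.chain_zero, rfl, ?_,
      fun i => T.tiling i.castSucc, ?_⟩⟩, ?_⟩
    · intro i
      have := T.chain_mono i.castSucc
      rwa [Fin.succ_castSucc] at this
    · intro i
      have := T.tiling_strip i.castSucc
      rwa [Fin.succ_castSucc] at this
    · refine tab_ext ?_ ?_
      · funext i
        induction i using Fin.lastCases with
        | last => simp only [snocTab]; rw [Fin.snoc_last, T.chain_last]
        | cast j => simp only [snocTab]; rw [Fin.snoc_castSucc]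
      · funext i
        induction i using Fin.lastCases with
        | last => simp only [snocTab]; rw [Fin.snoc_last]
        | cast j => simp only [snocTab]; rw [Fin.snoc_castSucc]

theorem subsingleton_tab_zero {n : ℕ} {μ δ : YoungDiagram} :
    Subsingleton (RibbonTableau n 0 μ δ) := by
  refine ⟨fun T T' => tab_ext ?_ ?_⟩
  · funext i
    have hi : i = 0 := Fin.ext (by omega)
    rw [hi, T.chain_zero, T'.chain_zero]
  · funext i
    exact i.elim0

instance finite_tab (n N : ℕ) (μ δ : YoungDiagram) : Finite (RibbonTableau n N μ δ) := by
  induction N generalizing μ with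
  | zero =>
    have := subsingleton_tab_zero (n := n) (μ := μ) (δ := δ)
    infer_instance
  | succ N ih =>
    have := (finite_strips n μ).to_subtype
    exact Finite.of_surjective _ (snocTab_bijective (n := n) (N := N) (μ := μ) (δ := δ)).2

/-- The ribbon function `𝒢_{μ/δ}` with the variables and `q` specialised to a commutative ring. -/
noncomputable def ribVal (n N : ℕ) (q : S) (x : Fin N → S) (μ δ : YoungDiagram) : S :=
  ∑ᶠ T : RibbonTableau n N μ δ, q ^ T.spin * ∏ i, x i ^ (T.tiling i).card

theorem ribVal_zero (n : ℕ) (q : S) (x : Fin 0 → S) (μ δ : YoungDiagram) :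
    ribVal n 0 q x μ δ = if μ = δ then 1 else 0 := by
  have := subsingleton_tab_zero (n := n) (μ := μ) (δ := δ)
  split_ifs with h
  · subst h
    have T₀ : RibbonTableau n 0 μ μ :=
      ⟨fun _ => μ, rfl, rfl, fun i => i.elim0, fun i => i.elim0, fun i => i.elim0⟩
    have := uniqueOfSubsingleton T₀
    rw [ribVal, finsum_unique]
    simp [RibbonTableau.spin]
  · have : IsEmpty (RibbonTableau n 0 μ δ) :=
      ⟨fun T => h (T.chain_last.symm.trans T.chain_zero)⟩
    rw [ribVal, finsum_of_isEmpty]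

theorem ribVal_succ (n N : ℕ) (q : S) (x : Fin (N + 1) → S) (μ δ : YoungDiagram) :
    ribVal n (N + 1) q x μ δ = ∑ᶠ p ∈ Strips n μ, q ^ tilingSpin p.2 *
      x (Fin.last N) ^ p.2.card * ribVal n N q (fun i => x i.castSucc) p.1 δ := by
  have hfin := (finite_strips n μ).to_subtype
  have := Fintype.ofFinite (Strips n μ)
  have : ∀ ν, Fintype (RibbonTableau n N ν δ) := fun ν => Fintype.ofFinite _
  rw [ribVal, ← finsum_comp_equiv (Equiv.ofBijective _ (snocTab_bijective (N := N))),
    finsum_eq_sum_of_fintype, Fintype.sum_sigma, ← finsum_set_coe_eq_finsum_mem,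
    finsum_eq_sum_of_fintype]
  refine Finset.sum_congr rfl fun p _ => ?_
  rw [ribVal, finsum_eq_sum_of_fintype, Finset.mul_sum]
  refine Finset.sum_congr rfl fun T _ => ?_
  simp only [Equiv.ofBijective_apply, snocTab, RibbonTableau.spin, Fin.sum_univ_castSucc,
    Fin.prod_univ_castSucc, Fin.snoc_castSucc, Fin.snoc_last, pow_add]
  ring

/-- Inside a window containing all its diagonals, iterated window operators enumerate tableaux. -/
theorem uAll_beads {n : ℕ} (hn : 1 ≤ n) (q : S) {a : ℤ} {len : ℕ} (δ : YoungDiagram) (N : ℕ)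
    (x : Fin N → S) {μ : YoungDiagram} (hμ : ∀ c ∈ μ.cells, a ≤ cont c ∧ cont c < a + len) :
    uAll n q a len N x (basis (beads δ)) (beads μ) = ribVal n N q x μ δ := by
  induction N generalizing μ with
  | zero =>
    rw [ribVal_zero]
    simp [uAll, basis, beads_injective.eq_iff]
  | succ N ih =>
    have hset : StripsIn n a len μ = Strips n μ := by
      ext p
      refine ⟨fun hp => hp.1, fun hp => ⟨hp, fun R hR => ?_⟩⟩
      obtain ⟨i, b, hb⟩ := exists_ribAt hn (hp.2.1.1 R hR)
      obtain ⟨c, hc, hc1, -⟩ := hb.exists_cell le_rfl (by omega)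
      have := hμ c (Strips.subset hp hR hc)
      exact ⟨i, b, by omega, by omega, hb⟩
    rw [ribVal_succ]
    simp only [uAll, Module.End.mul_apply]
    rw [uWin_beads hn, hset]
    refine finsum_mem_congr rfl fun p hp => ?_
    rw [ih]
    exact fun c hc => hμ c (hp.1 hc)

theorem exists_window (μ : YoungDiagram) :
    ∃ (a : ℤ) (len : ℕ), ∀ c ∈ μ.cells, a ≤ cont c ∧ cont c < a + len := by
  obtain ⟨M, hM⟩ := (μ.cells.image fun c => (cont c).natAbs).bddAbove
  refine ⟨-M, 2 * M + 1, fun c hc => ?_⟩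
  have := hM (Finset.mem_coe.2 (Finset.mem_image_of_mem _ hc))
  push_cast
  omega

theorem reach_of_ribVal {n : ℕ} (hn : 1 ≤ n) {q : S} {N : ℕ} {x : Fin N → S} {μ δ : YoungDiagram}
    (h : ribVal n N q x μ δ ≠ 0) : Relation.ReflTransGen (RibbonStep n) μ δ := by
  obtain ⟨a, len, hw⟩ := exists_window μ
  rw [← uAll_beads hn q δ N x hw] at h
  obtain ⟨μ', h1, h2⟩ := uAll_support
    (Q := fun s => ∃ μ, s = beads μ ∧ Relation.ReflTransGen (RibbonStep n) μ δ) (by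
      rintro s i ⟨ν, rfl, hν⟩ h1 h2
      obtain ⟨μ', hμ'⟩ := exists_add hn h1 h2
      exact ⟨μ', (hμ'.beads_iff hn).2.2.2.2,
        Relation.ReflTransGen.head ⟨hμ'.le, hμ'.isRibbon hn⟩ hν⟩)
    a len N x (by
      intro s hs
      refine ⟨δ, ?_, Relation.ReflTransGen.refl⟩
      by_contra hne
      exact hs (if_neg hne)) _ h
  rwa [beads_injective h1]

theorem card_of_reach {n : ℕ} {μ δ : YoungDiagram}
    (h : Relation.ReflTransGen (RibbonStep n) μ δ) : ∃ k, μ.card = δ.card + n * k := by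
  induction h using Relation.ReflTransGen.head_induction_on with
  | refl => exact ⟨0, by simp⟩
  | head h _ ih =>
    obtain ⟨k, hk⟩ := ih
    have h1 := h.2.1
    have h2 := Finset.card_sdiff_add_card_eq_card h.1
    refine ⟨k + 1, ?_⟩
    unfold YoungDiagram.card at *
    rw [mul_add]
    omega

theorem Strips.card_eq {n : ℕ} {μ : YoungDiagram} {p : YoungDiagram × Finset (Finset Cell)}
    (hp : p ∈ Strips n μ) : μ.card = p.1.card + n * p.2.card := by
  have h1 := Finset.card_sdiff_add_card_eq_card hp.1
  have h2 : (μ.cells \ p.1.cells).card = p.2.card * n := by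
    rw [← hp.2.1.2.2, Finset.card_biUnion (t := id) fun A hA B hB hne => hp.2.1.2.1 hA hB hne]
    exact Finset.sum_const_nat fun R hR => (hp.2.1.1 R hR).1
  unfold YoungDiagram.card
  rw [mul_comm n]
  omega

/-- Ribbon functions are homogeneous. -/
theorem ribVal_smul {n : ℕ} (hn : 1 ≤ n) (q t : S) (N : ℕ) (x : Fin N → S) {μ δ : YoungDiagram}
    {k : ℕ} (hk : μ.card = δ.card + n * k) :
    ribVal n N q (fun i => t * x i) μ δ = t ^ k * ribVal n N q x μ δ := by
  induction N generalizing μ k with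
  | zero =>
    simp only [ribVal_zero]
    split_ifs with h
    · subst h
      have : k = 0 := by
        have : n * k = 0 := by omega
        rcases Nat.mul_eq_zero.1 this with h | h <;> omega
      simp [this]
    · simp
  | succ N ih =>
    rw [ribVal_succ, ribVal_succ, mul_finsum_mem' _ _ (finite_strips n μ)]
    refine finsum_mem_congr rfl fun p hp => ?_
    have hc := Strips.card_eq hp
    by_cases hz : ∃ k', p.1.card = δ.card + n * k'
    · obtain ⟨k', hk'⟩ := hz
      have e : k = p.2.card + k' := by
        apply Nat.eq_of_mul_eq_mul_left hn
        rw [mul_add]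
        omega
      rw [ih _ hk', e]
      ring
    · have z : ∀ y, ribVal n N q y p.1 δ = 0 := by
        intro y
        by_contra h
        exact hz (card_of_reach (reach_of_ribVal hn h))
      rw [z, z]
      ring

theorem map_ribVal {S' : Type*} [CommRing S'] (f : S →+* S') (n N : ℕ) (q : S) (x : Fin N → S)
    (μ δ : YoungDiagram) :
    f (ribVal n N q x μ δ) = ribVal n N (f q) (fun i => f (x i)) μ δ := by
  have := Fintype.ofFinite (RibbonTableau n N μ δ)
  rw [ribVal, ribVal, finsum_eq_sum_of_fintype, finsum_eq_sum_of_fintype, map_sum]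
  simp

end RibbonCauchy

namespace RibbonCauchy

/-! ### The Cauchy identity for ribbon functions -/

theorem cell_bound {μ : YoungDiagram} {c : Cell} (hc : c ∈ μ.cells) :
    c.1 < μ.card ∧ c.2 < μ.card := by
  have hsub : Finset.range (c.1 + 1) ×ˢ Finset.range (c.2 + 1) ⊆ μ.cells := by
    intro d hd
    rw [Finset.mem_product, Finset.mem_range, Finset.mem_range] at hd
    exact μ.isLowerSet (show d ≤ c from ⟨by omega, by omega⟩) hc
  have h := Finset.card_le_card hsub
  rw [Finset.card_product, Finset.card_range, Finset.card_range] at h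
  unfold YoungDiagram.card
  constructor <;> nlinarith

theorem finite_card_le (M : ℕ) : {μ : YoungDiagram | μ.card ≤ M}.Finite := by
  refine Set.Finite.of_injOn (f := YoungDiagram.cells)
    (t := ((Finset.range M ×ˢ Finset.range M).powerset : Set (Finset Cell))) ?_ ?_
    (Finset.finite_toSet _)
  · intro μ hμ
    refine Finset.mem_coe.2 (Finset.mem_powerset.2 fun c hc => ?_)
    have h1 := cell_bound hc
    have h2 : μ.card ≤ M := hμ
    rw [Finset.mem_product, Finset.mem_range, Finset.mem_range]
    omega
  · intro ν _ ν' _ h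
    exact YoungDiagram.ext h

theorem window_of_nearVac {n : ℕ} {lo hi : ℤ} {K : ℕ} {μ : YoungDiagram}
    (h : NearVac n lo hi K (beads μ)) {c : Cell} (hc : c ∈ μ.cells) :
    lo - n * K ≤ cont c ∧ cont c < hi + n * K := by
  obtain ⟨Z, hZ1, hZ2⟩ := diagN_bound μ
  have hc' : (c.1 : ℤ) < diagN μ (cont c) := by
    exact Int.ofNat_lt.2 ((mem_iff_diagN μ c).1 hc)
  constructor
  · by_contra hlt
    push Not at hlt
    have key : ∀ m : ℕ, (diagN μ (cont c) : ℤ) + m = diagN μ (cont c - m) := by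
      intro m
      induction m with
      | zero => simp
      | succ m ih =>
        have := (mem_beads μ (cont c - m)).1 (h.1 _ (by omega))
        rw [show cont c - ((m + 1 : ℕ) : ℤ) = cont c - m - 1 by push_cast; ring, this]
        push_cast
        omega
    have h1 := key (Z + (cont c).natAbs)
    have h2 := hZ2 (cont c - (Z + (cont c).natAbs : ℕ)) (by omega)
    have h3 : (c.1 : ℤ) + cont c = c.2 := by simp only [cont]; ring
    omega
  · by_contra hlt
    push Not at hlt
    have key : ∀ m : ℕ, diagN μ (cont c) = diagN μ (cont c + m) := by
      intro m
      induction m with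
      | zero => simp
      | succ m ih =>
        have := (not_mem_beads μ (cont c + (m + 1 : ℕ))).1 (h.2 _ (by push_cast; omega))
        rw [← this, ih]
        congr 1
        push_cast
        ring
    have h1 := key (Z + (cont c).natAbs)
    have h2 := hZ1 (cont c + (Z + (cont c).natAbs : ℕ)) (by omega)
    omega

theorem core_beads {n : ℕ} (hn : 1 ≤ n) {δ : YoungDiagram} (hδ : ∀ ν, ¬ RibbonStep n δ ν) (i : ℤ)
    (hi : i + n ∈ beads δ) : i ∈ beads δ := by
  by_contra h
  obtain ⟨ν, hν⟩ := exists_remove hn hi h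
  exact hδ ν ⟨hν.le, hν.isRibbon hn⟩

variable {R : Type*} [CommRing R]

open Polynomial in
/-- The Cauchy identity for ribbon functions in degree `m`: the sum of products of ribbon functions
is the coefficient of `X ^ (2 m)` in an inverse modulo `X ^ (2 m + 1)` of the Cauchy product, whose
variables are rescaled by `X`. -/
theorem cauchy_trunc {n : ℕ} (hn : 1 ≤ n) {δ : YoungDiagram} (hδ : ∀ ν, ¬ RibbonStep n δ ν)
    (m N N' : ℕ) (q : R) (x : Fin N → R) (y : Fin N' → R) :
    ∃ A : R[X], A.coeff (2 * m) = ∑ᶠ μ ∈ {μ : YoungDiagram | μ.card = δ.card + n * m},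
        ribVal n N q x μ δ * ribVal n N' q y μ δ ∧
      X ^ (2 * m + 1) ∣ (∏ k, ∏ i, ∏ j ∈ Finset.range n,
        (1 - C (x i * y k * q ^ (2 * j)) * X ^ 2)) * A - 1 := by
  obtain ⟨Z, hZ1, hZ2⟩ := diagN_bound δ
  set M := δ.card + n * m with hM
  set V : Finset YoungDiagram := (finite_card_le M).toFinset with hV
  have memV : ∀ μ, μ ∈ V ↔ μ.card ≤ M := by intro μ; simp [hV]
  -- The number of ribbons of `μ / δ`.
  set kk : YoungDiagram → ℕ := fun μ => (μ.card - δ.card) / n with hkk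
  have hkk' : ∀ {μ k}, μ.card = δ.card + n * k → kk μ = k := by
    intro μ k h
    simp only [hkk]
    rw [h, Nat.add_sub_cancel_left, Nat.mul_div_cancel_left _ hn]
  refine ⟨∑ μ ∈ V, X ^ (2 * kk μ) * C (ribVal n N q x μ δ * ribVal n N' q y μ δ), ?_, ?_⟩
  · rw [finsetSum_coeff]
    simp only [coeff_mul_C, coeff_X_pow]
    rw [← finsum_mem_coe_finset]
    have hfin : {μ : YoungDiagram | μ.card = M} ⊆ (V : Set YoungDiagram) := by
      intro μ hμ
      exact (memV μ).2 (le_of_eq hμ)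
    have hf2 : ({μ : YoungDiagram | μ.card = M}).Finite := V.finite_toSet.subset hfin
    rw [finsum_mem_eq_finite_toFinset_sum _ hf2, finsum_mem_coe_finset]
    symm
    apply Finset.sum_subset_zero_on_sdiff
    · intro μ hμ
      exact hfin (by simpa using hμ)
    · intro μ hμ
      rw [Finset.mem_sdiff] at hμ
      by_cases h0 : ribVal n N q x μ δ = 0
      · simp [h0]
      · obtain ⟨k, hk⟩ := card_of_reach (reach_of_ribVal hn h0)
        rw [hkk' hk, if_neg, zero_mul]
        intro h
        apply hμ.2
        have : m = k := by omega
        subst this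
        simpa using hk
    · intro μ hμ
      have hμ' : μ.card = δ.card + n * m := by simpa using hμ
      rw [hkk' hμ', if_pos rfl, one_mul]
  · -- Apply `bead_cauchy` in the truncated polynomial ring, with `t` the class of `X`.
    let I : Ideal R[X] := Ideal.span {X ^ (2 * m + 1)}
    let π : R[X] →+* R[X] ⧸ I := Ideal.Quotient.mk I
    have ht : (π X) ^ (2 * m + 1) = 0 := by
      rw [← map_pow]
      exact Ideal.Quotient.eq_zero_iff_mem.2 (Ideal.mem_span_singleton_self _)
    set f : R →+* R[X] ⧸ I := π.comp C with hf
    -- The window `[-B, B)` contains the diagonals of every diagram that survives the truncation.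
    set B : ℕ := Z + n * (2 * m) + n + M + 5 with hB
    have h0 : NearVac n (-(Z : ℤ)) (Z + 1) 0 (beads δ) := by
      constructor
      · intro z hz
        simp only [Nat.cast_zero, mul_zero, sub_zero] at hz
        rw [mem_beads]
        have h1 := hZ2 z (by omega)
        have h2 := hZ2 (z - 1) (by omega)
        omega
      · intro z hz
        simp only [Nat.cast_zero, mul_zero, add_zero] at hz
        rw [not_mem_beads, hZ1 _ (by omega), hZ1 _ (by omega)]
    have ha : -(B : ℤ) + n ≤ -(Z : ℤ) - n * (2 * m : ℕ) := by
      rw [hB]; push_cast; omega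
    have hb : ((Z : ℤ) + 1) + n * (2 * m : ℕ) ≤ -(B : ℤ) + (2 * B : ℕ) := by
      rw [hB]; push_cast; omega
    have hc := bead_cauchy (q := f q) hn ht h0 (core_beads hn hδ) ha hb N N'
      (fun i => f (x i)) (fun k => f (y k))
    rw [← Ideal.mem_span_singleton]
    change _ ∈ I
    rw [← Ideal.Quotient.eq_zero_iff_mem, map_sub, map_one, sub_eq_zero, map_mul]
    refine Eq.trans ?_ hc
    congr 1
    · simp only [map_prod]
      refine Finset.prod_congr rfl fun k _ => Finset.prod_congr rfl fun i _ =>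
        Finset.prod_congr rfl fun j _ => ?_
      simp only [map_sub, map_one, map_mul, map_pow, hf, RingHom.comp_apply]
      change _ = 1 - π X * _ * _ * _
      simp only [π]
      ring
    · have hUV : ∀ μ, (∀ c ∈ μ.cells, -(B : ℤ) ≤ cont c ∧ cont c < -(B : ℤ) + (2 * B : ℕ)) →
          uAll n (f q) (-(B : ℤ)) (2 * B) N (fun i => π X * f (x i)) (basis (beads δ)) (beads μ) *
          uAll n (f q) (-(B : ℤ)) (2 * B) N' (fun i => π X * f (y i)) (basis (beads δ)) (beads μ) =
          (π X) ^ (2 * kk μ) * f (ribVal n N q x μ δ * ribVal n N' q y μ δ) := by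
        intro μ hμ
        rw [uAll_beads hn _ _ _ _ hμ, uAll_beads hn _ _ _ _ hμ]
        by_cases hz : ∃ k, μ.card = δ.card + n * k
        · obtain ⟨k, hk⟩ := hz
          rw [ribVal_smul hn _ _ _ _ hk, ribVal_smul hn _ _ _ _ hk, hkk' hk, map_mul, map_ribVal,
            map_ribVal]
          ring
        · have z : ∀ {S : Type _} [CommRing S] (q : S) (y), ribVal n N q y μ δ = 0 := by
            intro S _ q y
            by_contra h
            exact hz (card_of_reach (reach_of_ribVal hn h))
          rw [z, map_mul, map_ribVal, z]
          ring
      rw [map_sum, finsum_eq_sum_of_support_subset (s := V.image beads)]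
      · rw [Finset.sum_image fun μ _ ν _ h => beads_injective h]
        refine Finset.sum_congr rfl fun μ hμ => ?_
        rw [hUV μ]
        · simp only [map_mul, map_pow, hf, RingHom.comp_apply]
          rfl
        · intro c hc
          have h1 := cell_bound hc
          have h2 := (memV μ).1 hμ
          simp only [cont]
          omega
      · intro s hs
        rw [Function.mem_support] at hs
        have hs1 := left_ne_zero_of_mul hs
        obtain ⟨μ, rfl⟩ := uAll_support (Q := fun s => ∃ μ, s = beads μ) (by
            rintro s i ⟨ν, rfl⟩ h1 h2
            obtain ⟨μ', hμ'⟩ := exists_add hn h1 h2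
            exact ⟨μ', (hμ'.beads_iff hn).2.2.2.2⟩) _ _ _ _ (by
            intro s hs
            refine ⟨δ, ?_⟩
            by_contra hne
            exact hs (if_neg hne)) _ hs1
        have hnv : NearVac n (-(Z : ℤ)) (Z + 1) (2 * m) (beads μ) := by
          by_contra hnv
          exact hs1 (good_eq_zero ht (good_uAll (good_basis h0) _ _ _ _) hnv)
        have hw : ∀ c ∈ μ.cells, -(B : ℤ) ≤ cont c ∧ cont c < -(B : ℤ) + (2 * B : ℕ) := by
          intro c hc
          have := window_of_nearVac hnv hc
          omega
        have hs2 := hs1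
        rw [uAll_beads hn _ _ _ _ hw] at hs2
        obtain ⟨k, hk⟩ := card_of_reach (reach_of_ribVal hn hs2)
        rw [hUV μ hw, hkk' hk] at hs
        refine Finset.mem_coe.2 (Finset.mem_image_of_mem _ ((memV μ).2 ?_))
        by_contra hlt
        have hkm : m < k := by
          by_contra h
          have : n * k ≤ n * m := Nat.mul_le_mul_left _ (by omega)
          omega
        apply hs
        rw [show 2 * k = (2 * m + 1) + (2 * k - (2 * m + 1)) by omega, pow_add, ht]
        ring

open Polynomial in
/-- Inverses modulo a power of `X` are unique. -/
theorem coeff_unique {P A A' : R[X]} {d : ℕ} (h : X ^ (d + 1) ∣ P * A - 1)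
    (h' : X ^ (d + 1) ∣ P * A' - 1) : A.coeff d = A'.coeff d := by
  have h1 : X ^ (d + 1) ∣ A - A' := by
    have : A - A' = A * (-(P * A' - 1)) + A' * (P * A - 1) := by ring
    rw [this]
    exact dvd_add ((dvd_neg.2 h').mul_left _) (h.mul_left _)
  have := X_pow_dvd_iff.1 h1 d (Nat.lt_succ_self d)
  rwa [coeff_sub, sub_eq_zero] at this

end RibbonCauchy

namespace RibbonCauchy

/-! ### Linear independence of Schur polynomials -/

theorem card_rows (ν : YoungDiagram) (j : ℕ) :
    (ν.cells.filter fun c => c.1 < j).card = ∑ r ∈ Finset.range j, ν.rowLen r := by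
  rw [Finset.card_eq_sum_card_fiberwise (f := Prod.fst) (t := Finset.range j)]
  · refine Finset.sum_congr rfl fun r hr => ?_
    rw [YoungDiagram.rowLen_eq_card, YoungDiagram.row, Finset.filter_filter]
    congr 1
    ext c
    rw [Finset.mem_range] at hr
    simp only [Finset.mem_filter]
    constructor
    · rintro ⟨h1, h2, h3⟩
      exact ⟨h1, h3⟩
    · rintro ⟨h1, h3⟩
      exact ⟨h1, by omega, h3⟩
  · intro c hc
    simp only [Finset.coe_filter, Set.mem_ofPred_eq] at hc
    simpa using hc.2

/-- The number of entries `r + 1` in a tableau, extended by `0`. -/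
def wt {n N : ℕ} {μ δ : YoungDiagram} (T : RibbonTableau n N μ δ) (r : ℕ) : ℕ :=
  if h : r < N then (T.tiling ⟨r, h⟩).card else 0

theorem card_chain {N : ℕ} {ν : YoungDiagram} (T : RibbonTableau 1 N ν ⊥) (j : ℕ) (hj : j < N + 1) :
    (T.chain ⟨j, hj⟩).card = ∑ r ∈ Finset.range j, wt T r := by
  induction j with
  | zero =>
    have := T.chain_zero
    rw [show (⟨0, hj⟩ : Fin (N + 1)) = 0 from rfl, this]
    simp
  | succ j ih =>
    have h1 := T.chain_mono ⟨j, by omega⟩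
    have h2 := T.tiling_strip ⟨j, by omega⟩
    have h3 := Strips.card_eq (n := 1) (p := (_, _)) ⟨h1, h2⟩
    rw [Finset.sum_range_succ, ← ih (by omega), wt, dif_pos (show j < N by omega)]
    simpa using h3

/-- Entries at most `j` occupy the first `j` rows. -/
theorem row_chain {N : ℕ} {ν : YoungDiagram} (T : RibbonTableau 1 N ν ⊥) (j : ℕ) (hj : j < N + 1)
    (c : Cell) (hc : c ∈ (T.chain ⟨j, hj⟩).cells) : c.1 < j := by
  induction j generalizing c with
  | zero =>
    rw [show (⟨0, hj⟩ : Fin (N + 1)) = 0 from rfl, T.chain_zero] at hc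
    simp at hc
  | succ j ih =>
    by_cases hc0 : c.1 = 0
    · omega
    have h1 := T.chain_mono ⟨j, by omega⟩
    have h2 := T.tiling_strip ⟨j, by omega⟩
    by_cases hc1 : c ∈ (T.chain ⟨j, by omega⟩).cells
    · exact (ih (by omega) c hc1).trans (Nat.lt_succ_self j)
    have hcS : c ∈ (T.chain ⟨j + 1, hj⟩).cells \ (T.chain ⟨j, by omega⟩).cells :=
      Finset.mem_sdiff.2 ⟨hc, hc1⟩
    have hcS' := hcS
    change c ∈ (T.chain (Fin.succ ⟨j, by omega⟩)).cells \
      (T.chain (Fin.castSucc ⟨j, by omega⟩)).cells at hcS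
    rw [← h2.1.2.2, Finset.mem_biUnion] at hcS
    obtain ⟨A, hA, hcA⟩ := hcS
    obtain ⟨d, hd⟩ := Finset.card_eq_one.1 (h2.1.1 A hA).1
    have hcd : c = d := by
      have : c ∈ A := hcA
      rw [hd, Finset.mem_singleton] at this
      exact this
    subst hcd
    have htop : TopRightCell A c := by
      refine ⟨hcA, fun e he => ?_⟩
      rw [hd, Finset.mem_singleton] at he
      subst he
      exact ⟨le_rfl, fun _ => le_rfl⟩
    rcases h2.2 A hA c htop with h3 | h3
    · exact absurd h3 hc0
    · have h4 : (c.1 - 1, c.2) ∈ (T.chain ⟨j + 1, hj⟩).cells :=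
        (T.chain ⟨j + 1, hj⟩).isLowerSet (Prod.mk_le_mk.2 ⟨by omega, le_rfl⟩) hc
      have h5 : (c.1 - 1, c.2) ∈ (T.chain ⟨j, by omega⟩).cells := by
        by_contra h6
        exact h3 (Finset.mem_sdiff.2 ⟨h4, h6⟩)
      have := ih (by omega) _ h5
      simp only at this
      omega

theorem chain_le {n N : ℕ} {ν δ : YoungDiagram} (T : RibbonTableau n N ν δ) (j : Fin (N + 1)) :
    T.chain j ≤ ν := by
  have : Monotone T.chain := Fin.monotone_iff_le_succ.2 T.chain_mono
  exact (this (Fin.le_last j)).trans T.chain_last.le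

/-- The shape of a semistandard tableau dominates its weight. -/
theorem dominance {N : ℕ} {ν : YoungDiagram} (T : RibbonTableau 1 N ν ⊥) {j : ℕ} (hj : j ≤ N) :
    ∑ r ∈ Finset.range j, wt T r ≤ ∑ r ∈ Finset.range j, ν.rowLen r := by
  rw [← card_chain T j (by omega), ← card_rows]
  refine Finset.card_le_card fun c hc => Finset.mem_filter.2 ⟨chain_le T _ hc, row_chain T j _ c hc⟩

theorem isRibbon_singleton {ν : YoungDiagram} {c : Cell} (hc : c ∈ ν.cells) : IsRibbon 1 {c} := by
  refine ⟨Finset.card_singleton c, ?_, ?_, ?_⟩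
  · intro a ha b hb
    rw [Finset.mem_singleton] at ha hb
    subst ha
    subst hb
    exact Relation.ReflTransGen.refl
  · rintro ⟨i, j, h1, h2, -⟩
    rw [Finset.mem_singleton] at h1 h2
    rw [← h1] at h2
    simp at h2
  · refine ⟨⟨Finset.Iic c, by rw [Finset.coe_Iic]; exact isLowerSet_Iic c⟩,
      ⟨Finset.Iio c, by rw [Finset.coe_Iio]; exact isLowerSet_Iio c⟩, ?_, ?_⟩
    · intro d hd
      have : d ∈ Finset.Iio c := hd
      exact Finset.mem_Iic.2 (Finset.mem_Iio.1 this).le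
    · ext d
      simp only [Finset.mem_singleton, Finset.mem_sdiff, Finset.mem_Iic, Finset.mem_Iio]
      constructor
      · rintro rfl
        exact ⟨le_rfl, lt_irrefl _⟩
      · rintro ⟨h3, h4⟩
        exact h3.eq_or_lt.resolve_right h4

/-- The first `j` rows of a diagram. -/
def firstRows (ν : YoungDiagram) (j : ℕ) : YoungDiagram where
  cells := ν.cells.filter fun c => c.1 < j
  isLowerSet := by
    intro c d hdc hc
    rw [Finset.mem_coe, Finset.mem_filter] at *
    exact ⟨ν.isLowerSet hdc hc.1, lt_of_le_of_lt hdc.1 hc.2⟩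

/-- The superstandard tableau, with all entries `r + 1` in row `r`. -/
theorem exists_superstandard (ν : YoungDiagram) {N : ℕ} (h : ν.card ≤ N) :
    ∃ T : RibbonTableau 1 N ν ⊥, ∀ i, (T.tiling i).card = ν.rowLen i := by
  have hinj : Function.Injective (fun c : Cell => ({c} : Finset Cell)) :=
    fun a b h => Finset.singleton_injective h
  have hS : ∀ i : Fin N, (firstRows ν (i.succ : Fin (N + 1))).cells \
      (firstRows ν (i.castSucc : Fin (N + 1))).cells = ν.row i := by
    intro i
    ext c
    simp only [firstRows, YoungDiagram.row, Finset.mem_sdiff, Finset.mem_filter, Fin.val_succ,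
      Fin.val_castSucc]
    constructor
    · rintro ⟨⟨h1, h2⟩, h3⟩
      exact ⟨h1, by by_contra h4; exact h3 ⟨h1, by omega⟩⟩
    · rintro ⟨h1, h2⟩
      exact ⟨⟨h1, by omega⟩, by omega⟩
  refine ⟨⟨fun j => firstRows ν j, ?_, ?_, ?_, fun i => (ν.row i).image fun c => {c}, ?_⟩, ?_⟩
  · ext c
    simp [firstRows]
  · ext c
    simp only [firstRows, Fin.val_last, Finset.mem_filter]
    refine ⟨fun hc => hc.1, fun hc => ⟨hc, ?_⟩⟩
    exact (cell_bound hc).1.trans_le h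
  · intro i c hc
    have hc' : c ∈ ν.cells.filter fun c => c.1 < ((i.castSucc : Fin (N + 1)) : ℕ) := hc
    rw [Finset.mem_filter] at hc'
    have h2 := hc'.2
    rw [Fin.val_castSucc] at h2
    exact Finset.mem_filter.2 ⟨hc'.1, by rw [Fin.val_succ]; omega⟩
  · intro i
    rw [hS]
    refine ⟨⟨?_, ?_, ?_⟩, ?_⟩
    · intro A hA
      obtain ⟨c, hc, rfl⟩ := Finset.mem_image.1 hA
      exact isRibbon_singleton (Finset.mem_filter.1 hc).1
    · intro A hA B hB hne
      obtain ⟨c, hc, rfl⟩ := Finset.mem_image.1 (Finset.mem_coe.1 hA)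
      obtain ⟨d, hd, rfl⟩ := Finset.mem_image.1 (Finset.mem_coe.1 hB)
      exact Finset.disjoint_singleton.2 fun h => hne (by rw [h])
    · ext c
      simp only [Finset.mem_biUnion, Finset.mem_image, id]
      constructor
      · rintro ⟨A, ⟨d, hd, rfl⟩, hA⟩
        rwa [Finset.mem_singleton.1 hA]
      · exact fun hc => ⟨{c}, ⟨c, hc, rfl⟩, Finset.mem_singleton_self c⟩
    · intro A hA c hc
      obtain ⟨d, hd, rfl⟩ := Finset.mem_image.1 hA
      have := Finset.mem_singleton.1 hc.1
      subst this
      by_cases h0 : c.1 = 0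
      · exact Or.inl h0
      · right
        rw [YoungDiagram.row, Finset.mem_filter] at hd ⊢
        rintro ⟨-, h2⟩
        have h3 := hd.2
        simp only at h2
        omega
  · intro i
    dsimp only
    rw [Finset.card_image_of_injective _ hinj, ← YoungDiagram.rowLen_eq_card]

theorem spin_one {N : ℕ} {μ δ : YoungDiagram} (T : RibbonTableau 1 N μ δ) : T.spin = 0 := by
  refine Finset.sum_eq_zero fun i _ => Finset.sum_eq_zero fun A hA => ?_
  have h1 := ((T.tiling_strip i).1.1 A hA).1
  have h2 : (A.image Prod.fst).card ≤ A.card := Finset.card_image_le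
  unfold ribbonSpin
  omega

open MvPolynomial in
/-- The coefficients of a Schur polynomial are Kostka numbers. -/
theorem coeff_schur {B : Type*} [CommRing B] {N : ℕ} (q : MvPolynomial (Fin N) B)
    (ν : YoungDiagram) (d : Fin N →₀ ℕ) :
    coeff d (ribVal 1 N q X ν ⊥) =
      (Nat.card {T : RibbonTableau 1 N ν ⊥ // ∀ i, (T.tiling i).card = d i} : B) := by
  have := Fintype.ofFinite (RibbonTableau 1 N ν ⊥)
  rw [ribVal, finsum_eq_sum_of_fintype, coeff_sum, Nat.card_eq_fintype_card, Fintype.card_subtype,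
    Finset.card_filter, Nat.cast_sum]
  refine Finset.sum_congr rfl fun T _ => ?_
  have e : (∏ i, (X i : MvPolynomial (Fin N) B) ^ (T.tiling i).card) =
      monomial (Finsupp.equivFunOnFinite.symm fun i => (T.tiling i).card) 1 := by
    rw [monomial_eq, Finsupp.prod_fintype _ _ (by simp)]
    simp
  rw [spin_one, pow_zero, one_mul, e, coeff_monomial]
  have : (Finsupp.equivFunOnFinite.symm (fun i => (T.tiling i).card) = d) ↔
      ∀ i, (T.tiling i).card = d i := by
    rw [Finsupp.ext_iff]
    simp
  simp only [this]
  split_ifs <;> simp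

open MvPolynomial in
/-- Schur polynomials of degree `m` in at least `m` variables are linearly independent. -/
theorem schur_indep {B : Type*} [CommRing B] [IsDomain B] [CharZero B] {N m : ℕ} (hm : m ≤ N)
    (q : MvPolynomial (Fin N) B) (a : YoungDiagram → B)
    (h : ∑ᶠ ν ∈ {ν : YoungDiagram | ν.card = m}, C (a ν) * ribVal 1 N q X ν ⊥ = 0)
    (lam : YoungDiagram) (hlam : lam.card = m) : a lam = 0 := by
  by_contra hne
  have hfin : {ν : YoungDiagram | ν.card = m}.Finite :=
    (finite_card_le m).subset fun ν hν => le_of_eq hν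
  set V := hfin.toFinset with hV
  have memV : ∀ ν, ν ∈ V ↔ ν.card = m := by intro ν; simp [hV]
  -- `Φ` is strictly monotone for the dominance order. A `κ` maximising it among the diagrams with
  -- `a κ ≠ 0` is the only one contributing to the coefficient of `x ^ κ`.
  set Φ : YoungDiagram → ℕ := fun ν => ∑ j ∈ Finset.range (N + 1),
    ∑ r ∈ Finset.range j, ν.rowLen r with hΦ
  obtain ⟨κ, hκ, hmax⟩ := Finset.exists_max_image (V.filter fun ν => a ν ≠ 0) Φ
    ⟨lam, Finset.mem_filter.2 ⟨(memV _).2 hlam, hne⟩⟩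
  rw [Finset.mem_filter, memV] at hκ
  rw [finsum_mem_eq_finite_toFinset_sum _ hfin] at h
  set d : Fin N →₀ ℕ := Finsupp.equivFunOnFinite.symm fun i => κ.rowLen i with hd
  have h1 := congrArg (coeff d) h
  rw [coeff_sum, coeff_zero] at h1
  simp only [coeff_C_mul, coeff_schur] at h1
  rw [Finset.sum_eq_single κ] at h1
  · rcases mul_eq_zero.1 h1 with h2 | h2
    · exact hκ.2 h2
    · obtain ⟨T, hT⟩ := exists_superstandard κ (N := N) (by omega)
      have : Nonempty {T : RibbonTableau 1 N κ ⊥ // ∀ i, (T.tiling i).card = d i} :=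
        ⟨⟨T, fun i => by rw [hT]; simp [hd]⟩⟩
      have := Nat.card_pos (α := {T : RibbonTableau 1 N κ ⊥ // ∀ i, (T.tiling i).card = d i})
      rw [Nat.cast_eq_zero] at h2
      omega
  · intro ν hν hνκ
    by_contra hz
    have ha : a ν ≠ 0 := left_ne_zero_of_mul hz
    have hcard := right_ne_zero_of_mul hz
    rw [Nat.cast_ne_zero] at hcard
    have hne' := (Nat.card_ne_zero.1 hcard).1
    obtain ⟨T, hT⟩ := hne'
    have hwt : ∀ r, r < N → wt T r = κ.rowLen r := by
      intro r hr
      rw [wt, dif_pos hr, hT]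
      simp [hd]
    have hdom : ∀ j ∈ Finset.range (N + 1), ∑ r ∈ Finset.range j, κ.rowLen r ≤
        ∑ r ∈ Finset.range j, ν.rowLen r := by
      intro j hj
      rw [Finset.mem_range] at hj
      have := dominance T (j := j) (by omega)
      rwa [Finset.sum_congr rfl fun r hr => hwt r (by rw [Finset.mem_range] at hr; omega)] at this
    have hle := hmax ν (Finset.mem_filter.2 ⟨hν, ha⟩)
    have heq := (Finset.sum_eq_sum_iff_of_le hdom).1 (le_antisymm (Finset.sum_le_sum hdom) hle)
    have hrow : ∀ r, κ.rowLen r = ν.rowLen r := by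
      intro r
      by_cases hr : r < N
      · have h3 := heq (r + 1) (by rw [Finset.mem_range]; omega)
        have h4 := heq r (by rw [Finset.mem_range]; omega)
        rw [Finset.sum_range_succ, Finset.sum_range_succ] at h3
        omega
      · have key : ∀ τ : YoungDiagram, τ.card = m → τ.rowLen r = 0 := by
          intro τ hτ
          by_contra h5
          have h6 : (r, 0) ∈ τ := YoungDiagram.mem_iff_lt_rowLen.2 (by omega)
          have := (cell_bound (μ := τ) (c := (r, 0)) h6).1
          simp only at this
          omega
        rw [key κ hκ.1, key ν ((memV ν).1 hν)]
    apply hνκ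
    ext ⟨r, s⟩
    rw [YoungDiagram.mem_cells, YoungDiagram.mem_cells, YoungDiagram.mem_iff_lt_rowLen,
      YoungDiagram.mem_iff_lt_rowLen, hrow]
  · intro h2
    exact absurd ((memV κ).2 hκ.1) h2

end RibbonCauchy

namespace RibbonCauchy

/-! ### Comparison of the two Cauchy identities -/

theorem not_ribbonStep_bot (ν : YoungDiagram) : ¬ RibbonStep 1 ⊥ ν := by
  rintro ⟨-, h⟩
  have := h.1
  simp at this

/-- The Cauchy kernels for `n`-ribbons in `x, y` and for Schur functions in the alphabet
`q ^ (2 j) x_i` and `y` coincide, hence so do the degree `m` parts of their expansions. -/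
theorem cauchy_compare {R : Type*} [CommRing R] {n : ℕ} (hn : 1 ≤ n) {δ : YoungDiagram}
    (hδ : ∀ ν, ¬ RibbonStep n δ ν) (m N N' : ℕ) (q : R) (x : Fin N → R) (y : Fin N' → R) :
    ∑ᶠ ν ∈ {ν : YoungDiagram | ν.card = m},
        ribVal 1 (n * N) q (fun t => q ^ (2 * ((finProdFinEquiv.symm t).1 : ℕ)) *
          x (finProdFinEquiv.symm t).2) ν ⊥ * ribVal 1 N' q y ν ⊥ =
      ∑ᶠ μ ∈ {μ : YoungDiagram | μ.card = δ.card + n * m},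
        ribVal n N q x μ δ * ribVal n N' q y μ δ := by
  obtain ⟨A, hA, hA'⟩ := cauchy_trunc hn hδ m N N' q x y
  obtain ⟨B, hB, hB'⟩ := cauchy_trunc le_rfl not_ribbonStep_bot m (n * N) N' q
    (fun t => q ^ (2 * ((finProdFinEquiv.symm t).1 : ℕ)) * x (finProdFinEquiv.symm t).2) y
  have hbot : (⊥ : YoungDiagram).card + 1 * m = m := by simp
  rw [hbot] at hB
  rw [← hA, ← hB]
  refine coeff_unique hB' ?_
  convert hA' using 4 with k
  rw [← finProdFinEquiv.prod_comp, Fintype.prod_prod_type_right]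
  refine Finset.prod_congr rfl fun i _ => ?_
  rw [Finset.prod_range]
  refine Finset.prod_congr rfl fun j _ => ?_
  rw [Finset.prod_range_one, Equiv.symm_apply_apply]
  congr 3
  ring

theorem ribbonFn_eq (n N : ℕ) (μ δ : YoungDiagram) : ribbonFn n N μ δ =
    ribVal n N (MvPolynomial.C Polynomial.X) MvPolynomial.X μ δ := by
  simp only [ribbonFn, ribVal, tableauTerm, map_pow]

theorem schurAlph_eq (n N : ℕ) (lam : YoungDiagram) : schurAlph n N lam =
    ribVal 1 (n * N) (MvPolynomial.C Polynomial.X) (fun t =>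
      (MvPolynomial.C Polynomial.X) ^ (2 * ((finProdFinEquiv.symm t).1 : ℕ)) *
        MvPolynomial.X (finProdFinEquiv.symm t).2) lam ⊥ := by
  rw [schurAlph, schurPoly, ribbonFn_eq, ← AlgHom.coe_toRingHom, map_ribVal]
  congr 1
  · simp [MvPolynomial.algebraMap_eq]
  · funext t
    simp [alphabetVal]

/-- The expansion of `s_λ(A_q(x))`: extract the coefficient of `s_λ(y)` on both sides of
`cauchy_compare`, after expanding the ribbon functions in `y` into Schur polynomials. -/
theorem main_expansion (n N : ℕ) (hn : 1 ≤ n)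
    (lam delta : YoungDiagram) (hdelta : IsNCoreOf n delta delta)
    (N' : ℕ) (hN' : lam.card ≤ N')
    (c : YoungDiagram → YoungDiagram → Polynomial ℤ)
    (hc : ∀ mu : YoungDiagram, IsNCoreOf n delta mu → mu.card = delta.card + n * lam.card →
      ribbonFn n N' mu delta =
        ∑ᶠ nu ∈ {nu : YoungDiagram | nu.card = lam.card},
          MvPolynomial.C (c mu nu) * schurPoly N' nu) :
    schurAlph n N lam =
      ∑ᶠ mu ∈ {mu : YoungDiagram | IsNCoreOf n delta mu ∧
          mu.card = delta.card + n * lam.card},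
        MvPolynomial.C (c mu lam) * ribbonFn n N mu delta := by
  have hfin1 : {ν : YoungDiagram | ν.card = lam.card}.Finite :=
    (finite_card_le lam.card).subset fun ν hν => le_of_eq hν
  have hfin2 : {μ : YoungDiagram | μ.card = delta.card + n * lam.card}.Finite :=
    (finite_card_le (delta.card + n * lam.card)).subset fun ν hν => le_of_eq hν
  have hfin3 : {mu : YoungDiagram | IsNCoreOf n delta mu ∧
      mu.card = delta.card + n * lam.card}.Finite := hfin2.subset fun μ hμ => hμ.2
  -- Work over `B[y]` with `B = ℤ[q][x]`; `φ` embeds `ℤ[q][y]`.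
  let φ : MvPolynomial (Fin N') (Polynomial ℤ) →+*
      MvPolynomial (Fin N') (MvPolynomial (Fin N) (Polynomial ℤ)) :=
    MvPolynomial.map MvPolynomial.C
  let q : MvPolynomial (Fin N') (MvPolynomial (Fin N) (Polynomial ℤ)) :=
    MvPolynomial.C (MvPolynomial.C Polynomial.X)
  have hφ : ∀ (k : ℕ) (μ δ : YoungDiagram),
      φ (ribbonFn k N' μ δ) = ribVal k N' q MvPolynomial.X μ δ := by
    intro k μ δ
    rw [ribbonFn_eq]
    refine (map_ribVal (S := MvPolynomial (Fin N') (Polynomial ℤ))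
      (S' := MvPolynomial (Fin N') (MvPolynomial (Fin N) (Polynomial ℤ))) φ _ _ _ _ _ _).trans ?_
    congr 1
    · simp [φ, q]
    · funext i
      simp [φ]
  have key := cauchy_compare hn hdelta.2 lam.card N N' q
    (fun i => MvPolynomial.C (MvPolynomial.X i)) MvPolynomial.X
  have hL : ∀ ν, ribVal 1 (n * N) q (fun t => q ^ (2 * ((finProdFinEquiv.symm t).1 : ℕ)) *
      MvPolynomial.C (MvPolynomial.X (finProdFinEquiv.symm t).2)) ν ⊥ =
        MvPolynomial.C (schurAlph n N ν) := by
    intro ν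
    rw [schurAlph_eq]
    refine Eq.trans ?_ (map_ribVal MvPolynomial.C _ _ _ _ _ _).symm
    congr 1
    funext t
    simp [q]
  have hR : ∀ μ, ribVal n N q (fun i => MvPolynomial.C (MvPolynomial.X i)) μ delta =
      MvPolynomial.C (ribbonFn n N μ delta) := by
    intro μ
    rw [ribbonFn_eq]
    exact (map_ribVal MvPolynomial.C _ _ _ _ _ _).symm
  simp only [hL, hR] at key
  -- Only the `μ` with core `δ` contribute.
  have hset : ∑ᶠ μ ∈ {μ : YoungDiagram | μ.card = delta.card + n * lam.card},
        MvPolynomial.C (ribbonFn n N μ delta) * ribVal n N' q MvPolynomial.X μ delta =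
      ∑ μ ∈ hfin3.toFinset,
        MvPolynomial.C (ribbonFn n N μ delta) * ribVal n N' q MvPolynomial.X μ delta := by
    rw [finsum_mem_eq_finite_toFinset_sum _ hfin2]
    symm
    refine Finset.sum_subset ?_ ?_
    · intro μ hμ
      simp only [Set.Finite.mem_toFinset, Set.mem_ofPred_eq] at hμ ⊢
      exact hμ.2
    · intro μ hμ hμ'
      simp only [Set.Finite.mem_toFinset, Set.mem_ofPred_eq] at hμ hμ'
      have : ribVal n N' q MvPolynomial.X μ delta = 0 := by
        by_contra h
        exact hμ' ⟨⟨reach_of_ribVal hn h, hdelta.2⟩, hμ⟩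
      rw [this, mul_zero]
  have hexp : ∀ μ ∈ hfin3.toFinset, ribVal n N' q MvPolynomial.X μ delta =
      ∑ ν ∈ hfin1.toFinset, MvPolynomial.C (MvPolynomial.C (c μ ν)) *
        ribVal 1 N' q MvPolynomial.X ν ⊥ := by
    intro μ hμ
    simp only [Set.Finite.mem_toFinset, Set.mem_ofPred_eq] at hμ
    rw [← hφ, hc μ hμ.1 hμ.2, finsum_mem_eq_finite_toFinset_sum _ hfin1, map_sum]
    refine Finset.sum_congr rfl fun ν _ => ?_
    rw [map_mul, schurPoly, hφ]
    simp [φ]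
  have h0 := schur_indep hN' q (fun ν => schurAlph n N ν - ∑ μ ∈ hfin3.toFinset,
    MvPolynomial.C (c μ ν) * ribbonFn n N μ delta) ?_ lam rfl
  · rw [finsum_mem_eq_finite_toFinset_sum _ hfin3]
    exact sub_eq_zero.1 h0
  · rw [hset, Finset.sum_congr rfl (fun μ hμ => by rw [hexp μ hμ]),
      finsum_mem_eq_finite_toFinset_sum _ hfin1] at key
    rw [finsum_mem_eq_finite_toFinset_sum _ hfin1]
    simp only [map_sub, sub_mul, Finset.sum_sub_distrib]
    rw [key, sub_eq_zero]
    simp only [Finset.mul_sum, map_sum, Finset.sum_mul]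
    rw [Finset.sum_comm]
    refine Finset.sum_congr rfl fun ν _ => Finset.sum_congr rfl fun μ _ => ?_
    rw [map_mul]
    ring

end RibbonCauchy

/-- `s_λ(A_q(x)) = Σ_μ c^λ_μ(q) 𝒢_μ(x;q)`, summed over partitions `μ` with
`n`-core `δ` and `|μ/δ| = n|λ|`.  The q-Littlewood–Richardson coefficients `c μ ν` are
pinned down by the Schur expansions of the `𝒢_μ` in `N' ≥ |λ|` variables. -/
theorem schurAlph_eq_sum_qLR_G (n N : ℕ) (hn : 1 ≤ n) (hN : 1 ≤ N)
    (lam delta : YoungDiagram) (hdelta : IsNCoreOf n delta delta)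
    (N' : ℕ) (hN' : lam.card ≤ N')
    (c : YoungDiagram → YoungDiagram → Polynomial ℤ)
    (hc : ∀ mu : YoungDiagram, IsNCoreOf n delta mu → mu.card = delta.card + n * lam.card →
      ribbonFn n N' mu delta =
        ∑ᶠ nu ∈ {nu : YoungDiagram | nu.card = lam.card},
          MvPolynomial.C (c mu nu) * schurPoly N' nu) :
    schurAlph n N lam =
      ∑ᶠ mu ∈ {mu : YoungDiagram | IsNCoreOf n delta mu ∧
          mu.card = delta.card + n * lam.card},
        MvPolynomial.C (c mu lam) * ribbonFn n N mu delta := by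
  exact RibbonCauchy.main_expansion n N hn lam delta hdelta N' hN' c hc
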